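/- arXiv:math/0607598 — 3 statements merged into one kernel-verified Lean document; each statement's English description precedes it below -/
import Mathlib

section
/- Let f be a quasiperiodically forced circle homeomorphism over an irrational ω with lift F whose fibered rotation number is ρ. Suppose f is mode-locked: for some ε > 0 the fibered rotation numbers of both F_ε and F_{−ε} equal ρ. Then there exist an integer N ≥ 1 and a continuous injective map e : T¹ × [0,1] → T¹×T¹ such that the closed annulus 𝒜 := e(T¹×[0,1]) is mapped into its own interior by the N-th iterate of f, i.e. f^N(𝒜) ⊆ int(𝒜). -/
open Filter Topology MeasureTheory
open scoped ENNReal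

noncomputable section

/-- The circle `T¹ = ℝ/ℤ`. -/
abbrev T1 := AddCircle (1 : ℝ)

/-- Fiberwise iterate of the skew product: `fiberIter ω F n θ x = F^n_θ(x)`. -/
def fiberIter (ω : ℝ) (F : T1 → ℝ → ℝ) : ℕ → T1 → ℝ → ℝ
  | 0, _, x => x
  | n + 1, θ, x => fiberIter ω F n (θ + (ω : T1)) (F θ x)

/-- `F` is (the fiber part of) a lift of a quasiperiodically forced circle homeomorphism
over `ω`: `F(θ,x) = (θ+ω, F_θ(x))`, each `F_θ` a strictly increasing homeomorphism of `ℝ`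
commuting with `x ↦ x+1`. -/
structure IsQpfLift (ω : ℝ) (F : T1 → ℝ → ℝ) : Prop where
  cont : Continuous fun p : T1 × ℝ => F p.1 p.2
  mono : ∀ θ, StrictMono (F θ)
  surj : ∀ θ, Function.Surjective (F θ)
  per  : ∀ θ x, F θ (x + 1) = F θ x + 1

/-- `ρ` is the fibered rotation number of the lift `F`. -/
def HasRotNum (ω : ℝ) (F : T1 → ℝ → ℝ) (ρ : ℝ) : Prop :=
  ∀ θ x, Tendsto (fun n : ℕ => (fiberIter ω F n θ x - x) / n) atTop (𝓝 ρ)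

/-- The vertically perturbed family. -/
def shf (F : T1 → ℝ → ℝ) (s : ℝ) : T1 → ℝ → ℝ := fun θ x => F θ x + s

theorem shf_lift {ω : ℝ} {F : T1 → ℝ → ℝ} (hF : IsQpfLift ω F) (s : ℝ) :
    IsQpfLift ω (shf F s) where
  cont := hF.cont.add continuous_const
  mono := fun θ x y h => by
    have := hF.mono θ h
    simp only [shf]; linarith
  surj := fun θ y => by
    obtain ⟨x, hx⟩ := hF.surj θ (y - s)
    exact ⟨x, by simp only [shf]; linarith⟩
  per := fun θ x => by simp only [shf, hF.per]; ring

theorem fi_add (ω : ℝ) (F : T1 → ℝ → ℝ) (m n : ℕ) (θ : T1) (x : ℝ) :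
    fiberIter ω F (m + n) θ x
      = fiberIter ω F n (θ + m • (ω : T1)) (fiberIter ω F m θ x) := by
  induction m generalizing θ x with
  | zero => simp [fiberIter]
  | succ m ih =>
    rw [show m + 1 + n = (m + n) + 1 by ring]
    simp only [fiberIter]
    rw [ih, succ_nsmul']
    congr 1
    abel

theorem fi_strictMono {ω : ℝ} {F : T1 → ℝ → ℝ} (hF : IsQpfLift ω F) (n : ℕ) (θ : T1) :
    StrictMono (fiberIter ω F n θ) := by
  induction n generalizing θ with
  | zero => exact fun x y h => h
  | succ n ih => exact fun x y h => ih _ (hF.mono θ h)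

theorem fi_mono {ω : ℝ} {F : T1 → ℝ → ℝ} (hF : IsQpfLift ω F) (n : ℕ) (θ : T1) :
    Monotone (fiberIter ω F n θ) := (fi_strictMono hF n θ).monotone

theorem F_int {ω : ℝ} {F : T1 → ℝ → ℝ} (hF : IsQpfLift ω F) (θ : T1) (x : ℝ) (j : ℤ) :
    F θ (x + j) = F θ x + j := by
  induction j using Int.induction_on with
  | zero => simp
  | succ i ih =>
    push_cast at ih ⊢
    rw [← add_assoc, hF.per, ih]; ring
  | pred i ih =>
    push_cast at ih ⊢
    have := hF.per θ (x + (-(i : ℝ) - 1))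
    rw [show x + (-(i : ℝ) - 1) + 1 = x + -(i : ℝ) by ring, ih] at this
    linarith

theorem fi_int {ω : ℝ} {F : T1 → ℝ → ℝ} (hF : IsQpfLift ω F) (n : ℕ) (θ : T1) (x : ℝ) (j : ℤ) :
    fiberIter ω F n θ (x + j) = fiberIter ω F n θ x + j := by
  induction n generalizing θ x with
  | zero => simp [fiberIter]
  | succ n ih => simp only [fiberIter]; rw [F_int hF, ih]

theorem fi_cont {ω : ℝ} {F : T1 → ℝ → ℝ} (hF : IsQpfLift ω F) (n : ℕ) :
    Continuous fun p : T1 × ℝ => fiberIter ω F n p.1 p.2 := by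
  induction n with
  | zero => exact continuous_snd
  | succ n ih =>
    simp only [fiberIter]
    exact ih.comp ((continuous_fst.add continuous_const).prodMk hF.cont)

theorem fi_comp {ω : ℝ} {A B : T1 → ℝ → ℝ} {δ : ℝ}
    (hB : ∀ θ, Monotone (B θ))
    (h : ∀ θ θ' x, dist θ θ' < δ → A θ x ≤ B θ' x) (n : ℕ) {θ θ' : T1} {x y : ℝ}
    (hd : dist θ θ' < δ) (hxy : x ≤ y) :
    fiberIter ω A n θ x ≤ fiberIter ω B n θ' y := by
  induction n generalizing θ θ' x y with
  | zero => exact hxy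
  | succ n ih =>
    simp only [fiberIter]
    exact ih (by rwa [dist_add_right]) ((h θ θ' x hd).trans (hB θ' hxy))

theorem fi_le {ω : ℝ} {F : T1 → ℝ → ℝ} (hF : IsQpfLift ω F) {s t : ℝ} (hst : s ≤ t)
    (n : ℕ) (θ : T1) {x y : ℝ} (hxy : x ≤ y) :
    fiberIter ω (shf F s) n θ x ≤ fiberIter ω (shf F t) n θ y := by
  induction n generalizing θ x y with
  | zero => exact hxy
  | succ n ih =>
    simp only [fiberIter]
    refine ih _ ?_
    have := (hF.mono θ).monotone hxy
    simp only [shf]; linarith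

theorem fi_gap {ω : ℝ} {F : T1 → ℝ → ℝ} (hF : IsQpfLift ω F) {s t : ℝ} (hst : s ≤ t)
    (n : ℕ) (θ : T1) {x y : ℝ} (hxy : x ≤ y) :
    fiberIter ω (shf F s) (n + 1) θ x + (t - s) ≤ fiberIter ω (shf F t) (n + 1) θ y := by
  rw [fi_add, fi_add _ _ n 1]
  simp only [fiberIter]
  have := (hF.mono (θ + n • (ω : T1))).monotone (fi_le hF hst n θ hxy)
  simp only [shf] at *
  linarith

theorem unif {ω : ℝ} {F : T1 → ℝ → ℝ} (hF : IsQpfLift ω F) {e : ℝ} (he : 0 < e) :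
    ∃ δ > 0, ∀ (θ θ' : T1) (x : ℝ), dist θ θ' < δ → |F θ x - F θ' x| < e := by
  have hc : ContinuousOn (fun p : T1 × ℝ => F p.1 p.2) (Set.univ ×ˢ Set.Icc 0 1) :=
    hF.cont.continuousOn
  have hu := (isCompact_univ.prod isCompact_Icc).uniformContinuousOn_of_continuous hc
  rw [Metric.uniformContinuousOn_iff] at hu
  obtain ⟨δ, hδ, h⟩ := hu e he
  refine ⟨δ, hδ, fun θ θ' x hd => ?_⟩
  have h1 := h (θ, Int.fract x) ⟨trivial, Int.fract_nonneg x, (Int.fract_lt_one x).le⟩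
    (θ', Int.fract x) ⟨trivial, Int.fract_nonneg x, (Int.fract_lt_one x).le⟩
    (by simpa [Prod.dist_eq] using hd)
  rw [Real.dist_eq] at h1
  have e1 := F_int hF θ (Int.fract x) ⌊x⌋
  have e2 := F_int hF θ' (Int.fract x) ⌊x⌋
  rw [Int.fract_add_floor] at e1 e2
  rw [e1, e2]
  simpa using h1

theorem bdd_step {ω : ℝ} {F : T1 → ℝ → ℝ} (hF : IsQpfLift ω F) :
    ∃ B : ℝ, 0 ≤ B ∧ ∀ (θ : T1) (x : ℝ), |F θ x - x| ≤ B := by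
  have hc : ContinuousOn (fun p : T1 × ℝ => F p.1 p.2 - p.2) (Set.univ ×ˢ Set.Icc 0 1) :=
    (hF.cont.sub continuous_snd).continuousOn
  obtain ⟨B, hB⟩ := (isCompact_univ.prod isCompact_Icc).exists_bound_of_continuousOn hc
  refine ⟨|B|, abs_nonneg _, fun θ x => ?_⟩
  have h1 := hB (θ, Int.fract x) ⟨trivial, Int.fract_nonneg x, (Int.fract_lt_one x).le⟩
  have e1 := F_int hF θ (Int.fract x) ⌊x⌋
  rw [Int.fract_add_floor] at e1
  rw [e1]
  rw [Real.norm_eq_abs] at h1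
  refine le_trans ?_ (le_abs_self B)
  rw [show F θ (Int.fract x) + ⌊x⌋ - x = F θ (Int.fract x) - Int.fract x by
    have := Int.fract_add_floor x
    linarith]
  exact h1

theorem dense_orbit {ω : ℝ} (hω : Irrational ω) (θ : T1) {U : Set T1} (hU : IsOpen U)
    (hne : U.Nonempty) : ∃ n : ℕ, θ + n • (ω : T1) ∈ U := by
  have h1 : DenseRange (· • (ω : T1) : ℤ → T1) :=
    AddCircle.denseRange_zsmul_coe_iff.2 (by simpa using hω)
  have h2 := denseRange_zsmul_iff_nsmul.1 h1
  obtain ⟨y, hy⟩ := hne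
  have hV : IsOpen ((fun z : T1 => θ + z) ⁻¹' U) := hU.preimage (by fun_prop)
  obtain ⟨n, hn⟩ := h2.exists_mem_open hV ⟨y - θ, by simpa using hy⟩
  exact ⟨n, hn⟩

theorem dense_real {α : ℝ} (hα : Irrational α) (s a b : ℝ) (hab : a < b) :
    ∃ (n : ℕ) (i : ℤ), a < s + n * α + i ∧ s + n * α + i < b := by
  have ho : IsOpen ((fun x : ℝ => (x : T1)) '' Set.Ioo a b) :=
    QuotientAddGroup.isOpenMap_coe _ isOpen_Ioo
  obtain ⟨n, x, hx, hn⟩ := dense_orbit hα (s : T1) ho ((Set.nonempty_Ioo.2 hab).image _)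
  have h1 : ((x - (s + n * α) : ℝ) : T1) = 0 := by
    have h2 : (((s + n * α : ℝ)) : T1) = (s : T1) + n • (α : T1) := by
      rw [AddCircle.coe_add, ← nsmul_eq_mul, AddCircle.coe_nsmul]
    rw [AddCircle.coe_sub, h2]
    simp only at hn
    rw [hn, sub_self]
  obtain ⟨i, hi⟩ := (AddCircle.coe_eq_zero_iff (1 : ℝ)).1 h1
  refine ⟨n, i, ?_, ?_⟩ <;> simp at hi <;> linarith [hx.1, hx.2]

theorem thread {ω : ℝ} {F : T1 → ℝ → ℝ} (hF : IsQpfLift ω F) {ε ρ : ℝ}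
    (h1 : HasRotNum ω (shf F ε) ρ) (h2 : HasRotNum ω (shf F (-ε)) ρ) :
    ∃ (θ : T1) (x : ℝ), ∀ n,
      fiberIter ω (shf F ε) n θ x ≤ fiberIter ω (shf F (-ε)) n θ x + 1 := by
  by_contra hcon
  push Not at hcon
  have hH := shf_lift hF ε
  have hG := shf_lift hF (-ε)
  -- uniform time
  have hN : ∃ N : ℕ, ∀ (θ : T1) (x : ℝ), ∃ n ≤ N,
      fiberIter ω (shf F (-ε)) n θ x + 1 < fiberIter ω (shf F ε) n θ x := by
    have hK : IsCompact ((Set.univ : Set T1) ×ˢ Set.Icc (0 : ℝ) 1) :=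
      isCompact_univ.prod isCompact_Icc
    obtain ⟨t, ht⟩ := hK.elim_finite_subcover
      (fun n : ℕ => {p : T1 × ℝ | fiberIter ω (shf F (-ε)) n p.1 p.2 + 1
        < fiberIter ω (shf F ε) n p.1 p.2})
      (fun n => isOpen_lt ((fi_cont hG n).add continuous_const) (fi_cont hH n))
      (fun p _ => by
        obtain ⟨n, hn⟩ := hcon p.1 p.2
        exact Set.mem_iUnion.2 ⟨n, hn⟩)
    refine ⟨t.sup id, fun θ x => ?_⟩
    have hm := ht (show (θ, Int.fract x) ∈ _ from
      ⟨trivial, Int.fract_nonneg x, (Int.fract_lt_one x).le⟩)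
    simp only [Set.mem_iUnion] at hm
    obtain ⟨n, hnt, hn⟩ := hm
    refine ⟨n, Finset.le_sup (f := id) hnt, ?_⟩
    have e1 := fi_int hG n θ (Int.fract x) ⌊x⌋
    have e2 := fi_int hH n θ (Int.fract x) ⌊x⌋
    rw [Int.fract_add_floor] at e1 e2
    rw [e1, e2]
    simp only [Set.mem_setOf_eq] at hn
    linarith
  obtain ⟨N, hN⟩ := hN
  have hk : ∀ k : ℕ, ∃ n : ℕ, k ≤ n ∧ n ≤ k * N ∧
      fiberIter ω (shf F (-ε)) n 0 0 + k ≤ fiberIter ω (shf F ε) n 0 0 := by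
    intro k
    induction k with
    | zero => exact ⟨0, by simp [fiberIter]⟩
    | succ k ih =>
      obtain ⟨n, hn1, hn2, hn3⟩ := ih
      obtain ⟨m, hm1, hm2⟩ := hN (0 + n • (ω : T1)) (fiberIter ω (shf F (-ε)) n 0 0)
      have hm0 : 1 ≤ m := by
        rcases Nat.eq_zero_or_pos m with h | h
        · subst h; simp [fiberIter] at hm2; linarith
        · exact h
      refine ⟨n + m, by omega, by nlinarith, ?_⟩
      rw [fi_add, fi_add]
      have e3 := fi_mono hH m (0 + n • (ω : T1)) hn3
      have e4 := fi_int hH m (0 + n • (ω : T1)) (fiberIter ω (shf F (-ε)) n 0 0) k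
      push_cast at e4 ⊢
      rw [e4] at e3
      linarith
  have hlim := (h1 0 0).sub (h2 0 0)
  rw [sub_self] at hlim
  have hpos : (0 : ℝ) < 1 / (N + 1) := by positivity
  obtain ⟨n1, hn1⟩ := eventually_atTop.1 (hlim.eventually (gt_mem_nhds hpos))
  obtain ⟨n, ha, hb, hc⟩ := hk (n1 + 1)
  have h3 := hn1 n (by omega)
  have hn0 : (0 : ℝ) < n := by exact_mod_cast (by omega : 0 < n)
  rw [← sub_div, div_lt_div_iff₀ hn0 (by positivity)] at h3
  have hb' : (n : ℝ) ≤ ((n1 + 1 : ℕ) : ℝ) * N := by exact_mod_cast hb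
  have : (0 : ℝ) < ((n1 + 1 : ℕ) : ℝ) := by positivity
  have hN0 : (0 : ℝ) ≤ N := by positivity
  nlinarith

theorem syndetic {ω : ℝ} (hω : Irrational ω) (θ0 : T1) {δ : ℝ} (hδ : 0 < δ) :
    ∃ L : ℕ, ∀ θ : T1, ∃ l ≤ L, dist (θ + l • (ω : T1)) θ0 < δ := by
  obtain ⟨t, ht⟩ := (isCompact_univ (X := T1)).elim_finite_subcover
    (fun n : ℕ => {θ : T1 | dist (θ + n • (ω : T1)) θ0 < δ})
    (fun n => isOpen_lt (by fun_prop) continuous_const)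
    (fun θ _ => by
      obtain ⟨n, hn⟩ := dense_orbit hω θ (U := Metric.ball θ0 δ) Metric.isOpen_ball
        ⟨θ0, Metric.mem_ball_self hδ⟩
      exact Set.mem_iUnion.2 ⟨n, hn⟩)
  refine ⟨t.sup id, fun θ => ?_⟩
  have hm := ht (Set.mem_univ θ)
  simp only [Set.mem_iUnion] at hm
  obtain ⟨n, hnt, hn⟩ := hm
  exact ⟨n, Finset.le_sup (f := id) hnt, hn⟩

theorem fi_bdd {ω : ℝ} {F : T1 → ℝ → ℝ} {B : ℝ} (hB : ∀ (θ : T1) (x : ℝ), |F θ x - x| ≤ B)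
    (n : ℕ) (θ : T1) (x : ℝ) : |fiberIter ω F n θ x - x| ≤ n * B := by
  induction n generalizing θ x with
  | zero => simp [fiberIter]
  | succ n ih =>
    simp only [fiberIter]
    have h1 := ih (θ + ω) (F θ x)
    have h2 := hB θ x
    push_cast
    rw [abs_le] at *
    constructor <;> linarith [h1.1, h1.2, h2.1, h2.2]

theorem bdd_dev {ω : ℝ} (hω : Irrational ω) {F : T1 → ℝ → ℝ} (hF : IsQpfLift ω F) {ε ρ : ℝ}
    (hε : 0 < ε) (h1 : HasRotNum ω (shf F ε) ρ) (h2 : HasRotNum ω (shf F (-ε)) ρ) :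
    ∃ C : ℝ, 0 ≤ C ∧ ∀ (n : ℕ) (θ : T1) (x : ℝ),
      fiberIter ω (shf F ε) n θ x ≤ x + n * ρ + C ∧
      x + n * ρ - C ≤ fiberIter ω (shf F (-ε)) n θ x := by
  have hH := shf_lift hF ε
  have hG := shf_lift hF (-ε)
  obtain ⟨θ0, x0, hth⟩ := thread hF h1 h2
  obtain ⟨δ, hδ, hun⟩ := unif hF hε
  set a : ℕ → ℝ := fun n => fiberIter ω (shf F (-ε)) n θ0 x0 with ha
  have a0 : a 0 = x0 := rfl
  have hcmp : ∀ (θ θ' : T1) (x : ℝ), dist θ θ' < δ → shf F (-ε) θ x ≤ shf F ε θ' x := by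
    intro θ θ' x hd
    have := abs_lt.1 (hun θ θ' x hd)
    simp only [shf]; linarith [this.1, this.2]
  have haadd : ∀ r n, a (r + n) = fiberIter ω (shf F (-ε)) n (θ0 + r • (ω : T1)) (a r) :=
    fun r n => fi_add _ _ _ _ _ _
  have key : ∀ r : ℕ, dist (θ0 + r • (ω : T1)) θ0 < δ → ∀ n,
      |a (r + n) - a n - (a r - a 0)| ≤ 2 := by
    intro r hr n
    have hj1 := Int.le_ceil (a r - a 0)
    have hj2 := Int.ceil_lt_add_one (a r - a 0)
    set j := ⌈a r - a 0⌉
    have up : a (r + n) ≤ a n + 1 + j := by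
      rw [haadd]
      have e1 := fi_comp (ω := ω) (fun θ => (hH.mono θ).monotone) hcmp n hr
        (show a r ≤ x0 + j by rw [a0] at hj1; linarith)
      rw [fi_int hH] at e1
      linarith [hth n]
    have lo : a n + (j - 1) ≤ a (r + n) + 1 := by
      have e1 := fi_comp (ω := ω) (fun θ => (hH.mono θ).monotone) hcmp n
        (by rwa [dist_comm] at hr)
        (show x0 + ((j - 1 : ℤ) : ℝ) ≤ fiberIter ω (shf F ε) r θ0 x0 by
          have : a r ≤ fiberIter ω (shf F ε) r θ0 x0 :=
            fi_le hF (by linarith) r θ0 le_rfl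
          rw [a0] at hj2; push_cast; linarith)
      rw [fi_int hG, ← fi_add] at e1
      have := hth (r + n)
      push_cast at e1
      linarith
    rw [abs_le]
    constructor <;> linarith
  have avg : ∀ r : ℕ, dist (θ0 + r • (ω : T1)) θ0 < δ → |a r - a 0 - r * ρ| ≤ 2 := by
    intro r hr
    rcases Nat.eq_zero_or_pos r with h | h
    · subst h; simp
    have hk : ∀ k : ℕ, |a (k * r) - a 0 - k * (a r - a 0)| ≤ 2 * k := by
      intro k
      induction k with
      | zero => simp
      | succ k ih =>
        have e1 := key r hr (k * r)
        rw [show (k + 1) * r = r + k * r by ring]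
        push_cast
        rw [abs_le] at *
        constructor <;> linarith [e1.1, e1.2, ih.1, ih.2]
    have hr0 : (0 : ℝ) < r := by exact_mod_cast h
    have hl : Tendsto (fun k : ℕ => (a (k * r) - x0) / ((k * r : ℕ) : ℝ)) atTop (𝓝 ρ) :=
      (h2 θ0 x0).comp (tendsto_id.atTop_mul_const' h)
    have hl2 := ((hl.mul_const (r : ℝ)).const_sub (a r - a 0)).abs
    rw [mul_comm ρ] at hl2
    refine le_of_tendsto hl2 (eventually_atTop.2 ⟨1, fun k hk1 => ?_⟩)
    have hk0 : (0 : ℝ) < k := by exact_mod_cast hk1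
    have e2 := hk k
    rw [show (a r - a 0) - (a (k * r) - x0) / ((k * r : ℕ) : ℝ) * r
      = -((a (k * r) - a 0 - k * (a r - a 0)) / k) by
        rw [a0]; push_cast; field_simp; ring, abs_neg, abs_div, abs_of_pos hk0,
        div_le_iff₀ hk0]
    exact e2
  obtain ⟨B, hB0, hB⟩ := bdd_step hG
  obtain ⟨L, hL⟩ := syndetic hω θ0 hδ
  set C := 4 + L * (B + |ρ|) with hC
  have hC0 : 0 ≤ C := by positivity
  have hdev : ∀ n k, |a (n + k) - a n - k * ρ| ≤ C := by
    intro n k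
    obtain ⟨l, hl, hd⟩ := hL (θ0 + k • (ω : T1))
    rw [add_assoc, ← add_nsmul] at hd
    have e1 := key (k + l) hd n
    have e2 := avg (k + l) hd
    have e3 := fi_bdd (ω := ω) hB l (θ0 + (n + k) • (ω : T1)) (a (n + k))
    rw [← haadd] at e3
    rw [show k + l + n = n + k + l by ring] at e1
    have hlL : (l : ℝ) ≤ L := by exact_mod_cast hl
    have e4 : (l : ℝ) * B ≤ L * B := by gcongr
    have e5 : |(l : ℝ) * ρ| ≤ L * |ρ| := by
      rw [abs_mul, abs_of_nonneg (Nat.cast_nonneg l)]; gcongr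
    push_cast at e2
    rw [abs_le] at *
    constructor <;> nlinarith [e1.1, e1.2, e2.1, e2.2, e3.1, e3.2, e5.1, e5.2]
  refine ⟨C + 2, by linarith, fun n => ?_⟩
  have hdense : ∀ (m : ℕ) (x : ℝ),
      fiberIter ω (shf F ε) n (θ0 + m • (ω : T1)) x ≤ x + n * ρ + (C + 2) ∧
      x + n * ρ - (C + 2) ≤ fiberIter ω (shf F (-ε)) n (θ0 + m • (ω : T1)) x := by
    intro m x
    have hj1 := Int.le_ceil (x - a m)
    have hj2 := Int.ceil_lt_add_one (x - a m)
    set j := ⌈x - a m⌉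
    have hd := abs_le.1 (hdev m n)
    constructor
    · have e1 := fi_mono hH n (θ0 + m • (ω : T1))
        (show x ≤ fiberIter ω (shf F ε) m θ0 x0 + j by
          have : a m ≤ fiberIter ω (shf F ε) m θ0 x0 :=
            fi_le hF (by linarith) m θ0 le_rfl
          linarith)
      rw [fi_int hH, ← fi_add] at e1
      have := hth (m + n)
      linarith [hd.1, hd.2]
    · have e1 := fi_mono hG n (θ0 + m • (ω : T1))
        (show a m + ((j - 1 : ℤ) : ℝ) ≤ x by push_cast; linarith)
      rw [fi_int hG, ← haadd] at e1
      push_cast at e1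
      linarith [hd.1, hd.2]
  intro θ x
  have hdr : DenseRange (fun m : ℕ => θ0 + m • (ω : T1)) := by
    intro y
    rw [mem_closure_iff]
    intro U hU hy
    obtain ⟨m, hm⟩ := dense_orbit hω θ0 hU ⟨y, hy⟩
    exact ⟨_, hm, m, rfl⟩
  constructor
  · exact isClosed_property hdr (p := fun θ => fiberIter ω (shf F ε) n θ x ≤ x + n * ρ + (C + 2))
      (isClosed_le ((fi_cont hH n).comp (Continuous.prodMk_left x)) continuous_const)
      (fun m => (hdense m x).1) θ
  · exact isClosed_property hdr
      (p := fun θ => x + n * ρ - (C + 2) ≤ fiberIter ω (shf F (-ε)) n θ x)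
      (isClosed_le continuous_const ((fi_cont hG n).comp (Continuous.prodMk_left x)))
      (fun m => (hdense m x).2) θ

/-- lower envelope of the pushed-forward horizontal lines -/
def gfn (ω : ℝ) (G : T1 → ℝ → ℝ) (ρ : ℝ) (c : ℝ) (θ : T1) : ℝ :=
  ⨅ n : ℕ, fiberIter ω G n (θ - n • (ω : T1)) (c - n * ρ)

theorem gfn_bdd {ω : ℝ} {G : T1 → ℝ → ℝ} {ρ C : ℝ}
    (hlow : ∀ (n : ℕ) (θ : T1) (x : ℝ), x + n * ρ - C ≤ fiberIter ω G n θ x) (c : ℝ) (θ : T1)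
    (n : ℕ) : c - C ≤ fiberIter ω G n (θ - n • (ω : T1)) (c - n * ρ) := by
  have := hlow n (θ - n • (ω : T1)) (c - n * ρ)
  linarith

theorem gfn_bddBelow {ω : ℝ} {G : T1 → ℝ → ℝ} {ρ C : ℝ}
    (hlow : ∀ (n : ℕ) (θ : T1) (x : ℝ), x + n * ρ - C ≤ fiberIter ω G n θ x) (c : ℝ) (θ : T1) :
    BddBelow (Set.range fun n : ℕ => fiberIter ω G n (θ - n • (ω : T1)) (c - n * ρ)) :=
  ⟨c - C, by rintro _ ⟨n, rfl⟩; exact gfn_bdd hlow c θ n⟩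

theorem gfn_ge {ω : ℝ} {G : T1 → ℝ → ℝ} {ρ C : ℝ}
    (hlow : ∀ (n : ℕ) (θ : T1) (x : ℝ), x + n * ρ - C ≤ fiberIter ω G n θ x) (c : ℝ) (θ : T1) :
    c - C ≤ gfn ω G ρ c θ :=
  le_ciInf (gfn_bdd hlow c θ)

theorem gfn_le {ω : ℝ} {G : T1 → ℝ → ℝ} {ρ C : ℝ}
    (hlow : ∀ (n : ℕ) (θ : T1) (x : ℝ), x + n * ρ - C ≤ fiberIter ω G n θ x) (c : ℝ) (θ : T1) :
    gfn ω G ρ c θ ≤ c := by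
  have := ciInf_le (gfn_bddBelow hlow c θ) 0
  simpa [fiberIter, gfn] using this

theorem gfn_mono {ω : ℝ} {G : T1 → ℝ → ℝ} {ρ C : ℝ} (hG : IsQpfLift ω G)
    (hlow : ∀ (n : ℕ) (θ : T1) (x : ℝ), x + n * ρ - C ≤ fiberIter ω G n θ x) {c c' : ℝ}
    (h : c ≤ c') (θ : T1) :
    gfn ω G ρ c θ ≤ gfn ω G ρ c' θ :=
  ciInf_mono (gfn_bddBelow hlow c θ) fun n => fi_mono hG n _ (by linarith)

theorem gfn_int {ω : ℝ} {G : T1 → ℝ → ℝ} {ρ C : ℝ} (hG : IsQpfLift ω G)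
    (hlow : ∀ (n : ℕ) (θ : T1) (x : ℝ), x + n * ρ - C ≤ fiberIter ω G n θ x) (c : ℝ)
    (j : ℤ) (θ : T1) :
    gfn ω G ρ (c + j) θ = gfn ω G ρ c θ + j := by
  have h : ∀ (c : ℝ) (j : ℤ), gfn ω G ρ c θ + j ≤ gfn ω G ρ (c + j) θ := by
    intro c j
    refine le_ciInf fun n => ?_
    rw [show c + (j : ℝ) - n * ρ = (c - n * ρ) + j by ring, fi_int hG]
    have := ciInf_le (gfn_bddBelow hlow c θ) n
    simp only [gfn]
    linarith
  refine le_antisymm ?_ (h c j)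
  have := h (c + j) (-j)
  push_cast at this
  rw [add_neg_cancel_right] at this
  linarith

theorem gfn_step {ω : ℝ} {G : T1 → ℝ → ℝ} {ρ C : ℝ} (hG : IsQpfLift ω G)
    (hlow : ∀ (n : ℕ) (θ : T1) (x : ℝ), x + n * ρ - C ≤ fiberIter ω G n θ x) (c : ℝ)
    (θ : T1) :
    gfn ω G ρ (c + ρ) (θ + (ω : T1)) ≤ G θ (gfn ω G ρ c θ) := by
  have hc : Continuous (G θ) := hG.cont.comp (continuous_const.prodMk continuous_id)
  unfold gfn
  rw [(hG.mono θ).monotone.map_ciInf_of_continuousAt hc.continuousAt (gfn_bddBelow hlow c θ)]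
  refine le_ciInf fun n => ?_
  refine (ciInf_le (gfn_bddBelow hlow (c + ρ) (θ + ω)) (n + 1)).trans (le_of_eq ?_)
  rw [fi_add _ _ n 1]
  simp only [fiberIter]
  have e1 : θ + (ω : T1) - (n + 1) • (ω : T1) = θ - n • (ω : T1) := by
    rw [succ_nsmul]; abel
  have e2 : c + ρ - ((n + 1 : ℕ) : ℝ) * ρ = c - n * ρ := by push_cast; ring
  rw [e1, e2, sub_add_cancel]

theorem gfn_iter {ω : ℝ} {G : T1 → ℝ → ℝ} {ρ C : ℝ} (hG : IsQpfLift ω G)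
    (hlow : ∀ (n : ℕ) (θ : T1) (x : ℝ), x + n * ρ - C ≤ fiberIter ω G n θ x) (n : ℕ) (c : ℝ)
    (θ : T1) :
    gfn ω G ρ (c + n * ρ) (θ + n • (ω : T1)) ≤ fiberIter ω G n θ (gfn ω G ρ c θ) := by
  induction n generalizing c θ with
  | zero => simp [fiberIter]
  | succ n ih =>
    simp only [fiberIter]
    refine le_trans ?_ (fi_mono hG n _ (gfn_step hG hlow c θ))
    refine le_trans (le_of_eq ?_) (ih (c + ρ) (θ + ω))
    congr 1
    · push_cast; ring
    · rw [succ_nsmul]; abel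

theorem nonfail {ω : ℝ} {F : T1 → ℝ → ℝ} (hF : IsQpfLift ω F) {e ρ C : ℝ}
    (he : 0 < e)
    (hup : ∀ (n : ℕ) (θ : T1) (x : ℝ), fiberIter ω (shf F (2 * e)) n θ x ≤ x + n * ρ + C)
    (hlow : ∀ (n : ℕ) (θ : T1) (x : ℝ), x + n * ρ - C ≤ fiberIter ω (shf F (-e)) n θ x)
    {κ : ℝ} (hκ : 0 < κ) :
    ∃ δ > 0, ∃ (θs : T1) (cs : ℝ), ∀ (n : ℕ) (θ'' : T1), dist θ'' (θs + n • (ω : T1)) < δ →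
      fiberIter ω (shf F e) n θs (gfn ω (shf F (-e)) ρ cs θs)
        ≤ gfn ω (shf F (-e)) ρ (cs + κ + n * ρ) θ'' := by
  obtain ⟨δ0, hδ0, hun⟩ := unif hF he
  obtain ⟨K, hK⟩ := exists_nat_gt (2 * C / κ)
  rw [div_lt_iff₀ hκ] at hK
  set δ := δ0 / (K + 1) with hδdef
  have hδ : 0 < δ := by positivity
  have hKδ : (K + 1) * δ = δ0 := by rw [hδdef]; field_simp
  refine ⟨δ, hδ, ?_⟩
  by_contra hcon
  push Not at hcon
  have hcmp : ∀ (θ θ' : T1) (x : ℝ), dist θ θ' < δ0 → shf F e θ x ≤ shf F (2 * e) θ' x := by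
    intro θ θ' x hd
    have := (abs_lt.1 (hun θ θ' x hd)).2
    simp only [shf]; linarith
  have key : ∀ k : ℕ, k ≤ K → ∃ (N : ℕ) (θ' : T1), dist θ' (0 + N • (ω : T1)) ≤ k * δ ∧
      gfn ω (shf F (-e)) ρ (0 + k * κ + N * ρ) θ'
        ≤ fiberIter ω (shf F (2 * e)) N 0 (gfn ω (shf F (-e)) ρ 0 0) := by
    intro k
    induction k with
    | zero => intro _; exact ⟨0, 0, by simp, by simp [fiberIter]⟩
    | succ k ih =>
      intro hk
      obtain ⟨N, θ', hd, hg⟩ := ih (by omega)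
      obtain ⟨n, θ'', hd', hg'⟩ := hcon θ' (0 + k * κ + N * ρ)
      refine ⟨N + n, θ'', ?_, ?_⟩
      · have h1 := dist_triangle θ'' (θ' + n • (ω : T1)) (0 + (N + n) • (ω : T1))
        have h2 : dist (θ' + n • (ω : T1)) (0 + (N + n) • (ω : T1)) = dist θ' (0 + N • (ω : T1)) := by
          rw [add_nsmul, ← add_assoc, dist_add_right]
        rw [h2] at h1
        push_cast
        linarith
      · rw [fi_add]
        have hkK : (k : ℝ) + 1 ≤ K := by exact_mod_cast hk
        have h3 := fi_comp (ω := ω) (fun θ => ((shf_lift hF (2 * e)).mono θ).monotone) hcmp n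
          (lt_of_le_of_lt hd (by nlinarith : (k : ℝ) * δ < δ0)) hg
        refine le_trans (le_of_eq ?_) (hg'.le.trans h3)
        congr 1
        push_cast; ring
  obtain ⟨N, θ', -, hg⟩ := key K le_rfl
  have h1 := hup N 0 (gfn ω (shf F (-e)) ρ 0 0)
  have h2 := gfn_le hlow 0 0
  have h3 := gfn_ge hlow (0 + K * κ + N * ρ) θ'
  linarith

theorem dist_orbit (ω : ℝ) (θ : T1) (p q : ℕ) (I : ℤ) :
    dist (θ + p • (ω : T1)) (θ + q • (ω : T1)) ≤ |((p : ℝ) - q) * ω - I| := by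
  rw [dist_add_left, dist_eq_norm]
  have h : p • (ω : T1) - q • (ω : T1) = ((((p : ℝ) - q) * ω - I : ℝ) : T1) := by
    have h1 : ((I : ℝ) : T1) = 0 := by
      have := (AddCircle.coe_eq_zero_iff (1 : ℝ) (x := (I : ℝ))).2 ⟨I, by simp⟩
      exact this
    rw [AddCircle.coe_sub, h1, sub_zero, sub_mul, AddCircle.coe_sub]
    congr 1
    · rw [← AddCircle.coe_nsmul, nsmul_eq_mul]
    · rw [← AddCircle.coe_nsmul, nsmul_eq_mul]
  rw [h]
  rw [UnitAddCircle.norm_eq]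
  have := round_le (((p : ℝ) - q) * ω - I) 0
  simpa using this

theorem no_slow {ω ρ C e κ δ : ℝ} {g : ℝ → T1 → ℝ} {θs : T1} {cs : ℝ}
    (he : 0 < e) (hκ : 0 < κ) (hκe : 2 * κ ≤ e)
    (hge : ∀ c θ, c - C ≤ g c θ) (hle : ∀ c θ, g c θ ≤ c)
    (hmono : ∀ c c' θ, c ≤ c' → g c θ ≤ g c' θ)
    (hgint : ∀ c (j : ℤ) θ, g (c + j) θ = g c θ + j)
    (hstep : ∀ n : ℕ, 1 ≤ n → ∀ θ'', dist θ'' (θs + n • (ω : T1)) < δ →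
      g (cs + n * ρ) (θs + n • (ω : T1)) + 2 * e ≤ g (cs + n * ρ + κ) θ'')
    (m i j : ℤ) (hs : 0 < m * ρ - j) (hsκ : m * ρ - j < κ) :
    δ / (2 * κ) * (m * ρ - j) ≤ |m * ω - i| := by
  by_contra hcon
  push Not at hcon
  set s := m * ρ - j with hsdef
  set a : ℕ := ⌈κ / s⌉₊ with ha
  have ha1 : κ ≤ a * s := by
    have := Nat.le_ceil (κ / s)
    rwa [div_le_iff₀ hs] at this
  have ha2 : a * s < 2 * κ := by
    have := Nat.ceil_lt_add_one (show 0 ≤ κ / s by positivity)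
    rw [← ha] at this
    have h2 : (a : ℝ) * s < (κ / s + 1) * s := mul_lt_mul_of_pos_right this hs
    rw [add_mul, div_mul_cancel₀ _ hs.ne'] at h2
    linarith
  have ha0 : (0 : ℝ) < a := by
    by_contra h
    have : (a : ℝ) = 0 := le_antisymm (not_lt.1 h) (Nat.cast_nonneg _)
    rw [this] at ha1; linarith
  have hδ : 0 < δ := by
    have h1 : 0 < δ / (2 * κ) * s := lt_of_le_of_lt (abs_nonneg _) hcon
    have h2 := (mul_pos_iff_of_pos_right hs).1 h1
    by_contra hh
    have : δ / (2 * κ) ≤ 0 := div_nonpos_of_nonpos_of_nonneg (not_lt.1 hh) (by linarith)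
    linarith
  have hD : a * |m * ω - i| < δ := by
    calc a * |m * ω - i| < a * (δ / (2 * κ) * s) := mul_lt_mul_of_pos_left hcon ha0
      _ = δ / (2 * κ) * (a * s) := by ring
      _ ≤ δ / (2 * κ) * (2 * κ) := by gcongr
      _ = δ := by field_simp
  obtain ⟨L, hL⟩ := exists_nat_gt (C / e)
  rw [div_lt_iff₀ he] at hL
  have hn : ∀ l : ℕ, l ≤ L → ∃ n : ℕ, 1 ≤ n ∧ (n : ℤ) = 1 + L * a * |m| + l * a * m := by
    intro l hl
    have h0 : (1 : ℤ) ≤ 1 + L * a * |m| + l * a * m := by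
      have h1 : (l : ℤ) * a * |m| ≤ L * a * |m| := by
        gcongr
      have h2 : (l : ℤ) * a * (-|m|) ≤ l * a * m := by
        gcongr
        exact neg_abs_le m
      linarith
    refine ⟨(1 + L * a * |m| + l * a * m).toNat, ?_, ?_⟩
    · omega
    · exact Int.toNat_of_nonneg (by omega)
  choose! n hn1 hn2 using hn
  have hrec : ∀ l : ℕ, l + 1 ≤ L → ((n (l + 1) : ℕ) : ℝ) = n l + a * m := by
    intro l hl
    have h1 := hn2 l (by omega)
    have h2 := hn2 (l + 1) hl
    have h3 : ((n (l + 1) : ℕ) : ℤ) = n l + a * m := by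
      rw [h1, h2]; push_cast; ring
    exact_mod_cast h3
  have key : ∀ l : ℕ, l ≤ L → g (cs + n 0 * ρ) (θs + n 0 • (ω : T1)) + l * (2 * e + a * j)
      ≤ g (cs + n l * ρ) (θs + n l • (ω : T1)) ∧ (n l : ℝ) * ρ = n 0 * ρ + l * (a * s + a * j) := by
    intro l
    induction l with
    | zero => intro _; simp
    | succ l ih =>
      intro hl
      obtain ⟨ih1, ih2⟩ := ih (by omega)
      have hr := hrec l hl
      have hd : dist (θs + n (l + 1) • (ω : T1)) (θs + n l • (ω : T1)) < δ := by
        refine lt_of_le_of_lt (dist_orbit ω θs _ _ (a * i)) ?_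
        rw [hr]
        push_cast
        rw [show ((n l : ℝ) + a * m - n l) * ω - a * i = a * (m * ω - i) by ring, abs_mul,
          abs_of_pos ha0]
        exact hD
      have h1 := hstep (n l) (hn1 l (by omega)) _ hd
      have h2 := hmono (cs + n l * ρ + κ) (cs + n l * ρ + a * s)
        (θs + n (l + 1) • (ω : T1)) (by linarith)
      have h3 := hgint (cs + n l * ρ + a * s) (a * j) (θs + n (l + 1) • (ω : T1))
      have h4 : cs + n l * ρ + a * s + ((a * j : ℤ) : ℝ) = cs + n (l + 1) * ρ := by
        rw [hr, hsdef]; push_cast; ring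
      rw [h4] at h3
      push_cast at h3 ⊢
      constructor
      · linarith
      · rw [hr, add_mul, ih2, hsdef]; ring
  obtain ⟨k1, k2⟩ := key L le_rfl
  have h1 := hge (cs + n 0 * ρ) (θs + n 0 • (ω : T1))
  have h2 := hle (cs + n L * ρ) (θs + n L • (ω : T1))
  have hL0 : (0 : ℝ) ≤ L := Nat.cast_nonneg _
  have h3 : (L : ℝ) * (a * s) ≤ L * e := by gcongr; linarith
  nlinarith

theorem recur (ω ρ : ℝ) {τ : ℝ} (hτ : 0 < τ) :
    ∃ m i j : ℤ, 1 ≤ m ∧ |m * ω - i| < τ ∧ |m * ρ - j| < τ := by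
  have h := mapClusterPt_zero_atTop_nsmul (((ω : T1), (ρ : T1)) : T1 × T1)
  rw [mapClusterPt_iff_frequently] at h
  obtain ⟨m, hm, hm1⟩ := ((h _ (Metric.ball_mem_nhds 0 hτ)).and_eventually
    (eventually_ge_atTop 1)).exists
  rw [mem_ball_zero_iff] at hm
  have e1 : m • (ω : T1) = ((m * ω : ℝ) : T1) := by rw [← AddCircle.coe_nsmul, nsmul_eq_mul]
  have e2 : m • (ρ : T1) = ((m * ρ : ℝ) : T1) := by rw [← AddCircle.coe_nsmul, nsmul_eq_mul]
  have h1 := (norm_fst_le (m • (((ω : T1), (ρ : T1)) : T1 × T1))).trans_lt hm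
  have h2 := (norm_snd_le (m • (((ω : T1), (ρ : T1)) : T1 × T1))).trans_lt hm
  simp only [Prod.smul_fst, Prod.smul_snd, e1, e2, UnitAddCircle.norm_eq] at h1 h2
  exact ⟨m, _, _, by exact_mod_cast hm1, by simpa using h1, by simpa using h2⟩

theorem rational_rel {ω ρ κ η : ℝ} (hω : Irrational ω) (hκ : 0 < κ) (hη : 0 < η)
    (h : ∀ m i j : ℤ, 0 < m * ρ - j → m * ρ - j < κ → η * (m * ρ - j) ≤ |m * ω - i|) :
    ∃ a b c : ℤ, a ≠ 0 ∧ a * ρ = b * ω + c := by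
  set τ := min (κ / 4) (η * κ / 8) with hτdef
  have hτ : 0 < τ := by positivity
  have hτ1 : τ ≤ κ / 4 := min_le_left _ _
  have hτ2 : τ ≤ η * κ / 8 := min_le_right _ _
  obtain ⟨m, i, j, hm, hd, hs⟩ := recur ω ρ hτ
  have hmR : (1 : ℝ) ≤ m := by exact_mod_cast hm
  have hd0 : (m : ℝ) * ω - i ≠ 0 := by
    intro h0
    have : (m : ℝ) * ω = i := by linarith
    exact (hω.intCast_mul (by omega : m ≠ 0)).ne_int i this
  have hdp : 0 < |(m : ℝ) * ω - i| := abs_pos.2 hd0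
  obtain ⟨m', i', j', hm', hd', hs'⟩ := recur ω ρ
    (lt_min hτ (div_pos hdp (by linarith : (0 : ℝ) < m)))
  have hs'' := lt_of_lt_of_le hs' (min_le_left _ _)
  have hd'' := lt_of_lt_of_le hd' (min_le_left _ _)
  have hdq := lt_of_lt_of_le hd' (min_le_right _ _)
  have hm'R : (1 : ℝ) ≤ m' := by exact_mod_cast hm'
  rw [lt_div_iff₀ (by linarith)] at hdq
  have hne : i * m' - i' * m ≠ 0 := by
    intro h0
    have h0R : (i : ℝ) * m' - i' * m = 0 := by exact_mod_cast h0
    have h1 : ((m : ℝ) * ω - i) * m' = (m' * ω - i') * m := by linarith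
    have h2 := congrArg abs h1
    rw [abs_mul, abs_mul, abs_of_pos (by linarith : (0 : ℝ) < m),
      abs_of_pos (by linarith : (0 : ℝ) < m')] at h2
    nlinarith
  by_cases hdet : ((m : ℝ) * ρ - j) * (m' * ω - i') - (m' * ρ - j') * (m * ω - i) = 0
  · refine ⟨i * m' - i' * m, j * m' - j' * m, j' * i - j * i', hne, ?_⟩
    push_cast
    linarith
  · exfalso
    set s := (m : ℝ) * ρ - j
    set s' := (m' : ℝ) * ρ - j'
    set d := (m : ℝ) * ω - i
    set d' := (m' : ℝ) * ω - i'
    set Δ := s * d' - s' * d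
    set x := (κ / 2) * d' / Δ
    set y := -(κ / 2) * d / Δ
    have e1 : x * s + y * s' = κ / 2 := by
      simp only [x, y]; field_simp; simp only [Δ]; ring
    have e2 : x * d + y * d' = 0 := by
      simp only [x, y]; field_simp; ring
    have r1 := abs_sub_round x
    have r2 := abs_sub_round y
    have b : ∀ u u' : ℝ, |u| < τ → |u'| < τ →
        |(x * u + y * u') - (round x * u + round y * u')| ≤ τ := by
      intro u u' hu hu'
      rw [show (x * u + y * u') - (round x * u + round y * u')
        = (x - round x) * u + (y - round y) * u' by ring]
      refine (abs_add_le _ _).trans ?_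
      rw [abs_mul, abs_mul]
      have := mul_le_mul r1 hu.le (abs_nonneg _) (by norm_num)
      have := mul_le_mul r2 hu'.le (abs_nonneg _) (by norm_num)
      linarith
    have b1 := b s s' hs hs''
    have b2 := b d d' hd hd''
    rw [e1, abs_le] at b1
    rw [e2, zero_sub, abs_neg] at b2
    have hS : ((round x * m + round y * m' : ℤ) : ℝ) * ρ - ((round x * j + round y * j' : ℤ) : ℝ)
        = round x * s + round y * s' := by
      simp only [s, s']; push_cast; ring
    have hDD : ((round x * m + round y * m' : ℤ) : ℝ) * ω - ((round x * i + round y * i' : ℤ) : ℝ)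
        = round x * d + round y * d' := by
      simp only [d, d']; push_cast; ring
    have hh := h (round x * m + round y * m') (round x * i + round y * i')
      (round x * j + round y * j')
    rw [hS, hDD] at hh
    have hh' := hh (by linarith) (by linarith)
    have : η * (κ / 4) ≤ η * (round x * s + round y * s') := by
      gcongr; linarith
    nlinarith

/-- graph transform -/
def itM (M : ℝ → ℝ → ℝ) (α : ℝ) (w : ℝ → ℝ) : ℕ → ℝ → ℝ
  | 0 => w
  | N + 1 => fun s => M (s - α) (itM M α w N (s - α))

theorem itM_mono {M : ℝ → ℝ → ℝ} {α : ℝ} (hm : ∀ t, StrictMono (M t)) {w w' : ℝ → ℝ}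
    (h : ∀ s, w s ≤ w' s) (N : ℕ) (s : ℝ) : itM M α w N s ≤ itM M α w' N s := by
  induction N generalizing s with
  | zero => exact h s
  | succ N ih => exact (hm _).monotone (ih _)

theorem itM_strictMono {M : ℝ → ℝ → ℝ} {α : ℝ} (hm : ∀ t, StrictMono (M t)) {w w' : ℝ → ℝ}
    (h : ∀ s, w s < w' s) (N : ℕ) (s : ℝ) : itM M α w N s < itM M α w' N s := by
  induction N generalizing s with
  | zero => exact h s
  | succ N ih => exact (hm _) (ih _)

theorem itM_succ' {M : ℝ → ℝ → ℝ} {α : ℝ} {w : ℝ → ℝ} (N : ℕ) :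
    itM M α w (N + 1) = itM M α (fun s => M (s - α) (w (s - α))) N := by
  induction N with
  | zero => rfl
  | succ N ih =>
    funext s
    change M (s - α) (itM M α w (N + 1) (s - α)) = M (s - α) (itM M α _ N (s - α))
    rw [ih]

theorem itM_anti {M : ℝ → ℝ → ℝ} {α : ℝ} (hm : ∀ t, StrictMono (M t)) {w : ℝ → ℝ}
    (h : ∀ s, M (s - α) (w (s - α)) ≤ w s) (s : ℝ) {N N' : ℕ} (hN : N ≤ N') :
    itM M α w N' s ≤ itM M α w N s := by
  induction N', hN using Nat.le_induction with
  | base => exact le_rfl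
  | succ n _ ih =>
    rw [itM_succ']
    exact (itM_mono hm h n s).trans ih

theorem itM_usc {M : ℝ → ℝ → ℝ} {α : ℝ} (hc : Continuous fun p : ℝ × ℝ => M p.1 p.2)
    (hm : ∀ t, StrictMono (M t)) {w : ℝ → ℝ}
    (h : ∀ s y, w s < y → ∀ᶠ s' in 𝓝 s, w s' < y) (N : ℕ) :
    ∀ s y, itM M α w N s < y → ∀ᶠ s' in 𝓝 s, itM M α w N s' < y := by
  induction N with
  | zero => exact h
  | succ N ih =>
    intro s y hy
    simp only [itM] at hy ⊢
    have hcz : Continuous fun z => M (s - α) z := hc.comp (continuous_const.prodMk continuous_id)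
    have h1 : ∀ᶠ z in 𝓝[>] (itM M α w N (s - α)), M (s - α) z < y :=
      (hcz.continuousAt.eventually (eventually_lt_nhds hy)).filter_mono nhdsWithin_le_nhds
    obtain ⟨z, hz1, hz2⟩ := (h1.and self_mem_nhdsWithin).exists
    have hcs : Continuous fun s' => M (s' - α) z := by fun_prop
    have h2 : ∀ᶠ s' in 𝓝 s, M (s' - α) z < y :=
      hcs.continuousAt.eventually (eventually_lt_nhds hz1)
    have hct : Continuous fun s' : ℝ => s' - α := by fun_prop
    have h3 : ∀ᶠ s' in 𝓝 s, itM M α w N (s' - α) < z :=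
      hct.continuousAt.eventually (ih (s - α) z hz2)
    filter_upwards [h2, h3] with s' a b
    exact (hm _ b).trans a

theorem itM_per {M : ℝ → ℝ → ℝ} {α : ℝ} (hp : ∀ t x, M (t + 1) x = M t x) {w : ℝ → ℝ}
    (h : ∀ s, w (s + 1) = w s) (N : ℕ) (s : ℝ) : itM M α w N (s + 1) = itM M α w N s := by
  induction N generalizing s with
  | zero => exact h s
  | succ N ih =>
    simp only [itM]
    rw [show s + 1 - α = (s - α) + 1 by ring, ih, hp]

theorem per_int {w : ℝ → ℝ} (h : ∀ s, w (s + 1) = w s) (s : ℝ) (j : ℤ) : w (s + j) = w s := by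
  have : Function.Periodic w 1 := h
  simpa using this.int_mul j s

theorem coe_eq_iff' {a b : ℝ} : (a : T1) = (b : T1) ↔ ∃ j : ℤ, a = b + j := by
  rw [← sub_eq_zero, ← AddCircle.coe_sub, AddCircle.coe_eq_zero_iff]
  constructor
  · rintro ⟨j, hj⟩
    refine ⟨j, ?_⟩
    simp at hj; linarith
  · rintro ⟨j, hj⟩
    refine ⟨j, ?_⟩
    simp; linarith

theorem insertion {v u : ℝ → ℝ}
    (hv : ∀ s y, v s < y → ∀ᶠ s' in 𝓝 s, v s' < y)
    (hu : ∀ s y, y < u s → ∀ᶠ s' in 𝓝 s, y < u s')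
    (hvp : ∀ s, v (s + 1) = v s) (hup : ∀ s, u (s + 1) = u s)
    (hvu : ∀ s, v s < u s) :
    ∃ w : C(T1, ℝ), ∀ s : ℝ, v s < w (s : T1) ∧ w (s : T1) < u s := by
  obtain ⟨w, hw⟩ := exists_continuous_forall_mem_convex_of_local_const
    (X := T1) (E := ℝ) (t := fun y => {c : ℝ | ∀ s : ℝ, (s : T1) = y → v s < c ∧ c < u s})
    (by
      intro y
      have : {c : ℝ | ∀ s : ℝ, (s : T1) = y → v s < c ∧ c < u s}
          = ⋂ (s : ℝ) (_ : (s : T1) = y), Set.Ioo (v s) (u s) := by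
        ext c; simp
      rw [this]
      exact convex_iInter fun s => convex_iInter fun _ => convex_Ioo _ _)
    (by
      intro y
      induction y using QuotientAddGroup.induction_on with
      | H s =>
      obtain ⟨c, hc1, hc2⟩ := exists_between (hvu s)
      refine ⟨c, ?_⟩
      have h1 := (hv s c hc1).and (hu s c hc2)
      have h2 : 𝓝 ((s : ℝ) : T1) = map (fun x : ℝ => (x : T1)) (𝓝 s) :=
        QuotientAddGroup.nhds_eq _ s
      change ∀ᶠ y in 𝓝 ((s : ℝ) : T1), _
      rw [h2, eventually_map]
      filter_upwards [h1] with s' hs' s'' hs''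
      obtain ⟨j, rfl⟩ := coe_eq_iff'.1 hs''
      rw [per_int hvp, per_int hup]
      exact hs')
  exact ⟨w, fun s => hw (s : T1) s rfl⟩

/-- upper envelope of nearby points of `S` -/
def uenv (S : Set (ℝ × ℝ)) (r s : ℝ) : ℝ := sSup {x | ∃ t, (t, x) ∈ S ∧ |t - s| < r}

/-- upper semicontinuous variant -/
def venv (S : Set (ℝ × ℝ)) (R s : ℝ) : ℝ := sInf ((fun r => uenv S r s) '' Set.Ioo R (2 * R))

theorem curve {M : ℝ → ℝ → ℝ} {α : ℝ} (hα : Irrational α)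
    (hc : Continuous fun p : ℝ × ℝ => M p.1 p.2)
    (hm : ∀ t, StrictMono (M t)) (hp : ∀ t x, M (t + 1) x = M t x)
    {S : Set (ℝ × ℝ)} {R η B : ℝ} (hR : 0 < R) (hη : 0 < η)
    (hS : ∀ t x, (t, x) ∈ S → ∀ j : ℤ, (t + j, x) ∈ S)
    (hstep : ∀ t x s, (t, x) ∈ S → |t - s| < 2 * R → ∃ x', (t + α, x') ∈ S ∧ M s x + η ≤ x')
    (hB : ∀ t x, (t, x) ∈ S → |x| ≤ B)
    (hdense : ∀ s, ∃ t x, (t, x) ∈ S ∧ |t - s| < R) :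
    ∃ N0 : ℕ, ∀ N ≥ N0, ∃ w : C(T1, ℝ), ∀ s : ℝ,
      itM M α (uenv S R) N s < w (s : T1) ∧ w (s : T1) < uenv S R s - η := by
  have hbdd : ∀ r s, BddAbove {x | ∃ t, (t, x) ∈ S ∧ |t - s| < r} := fun r s =>
    ⟨B, by rintro x ⟨t, ht, -⟩; exact (abs_le.1 (hB t x ht)).2⟩
  have hne : ∀ r s, R ≤ r → {x | ∃ t, (t, x) ∈ S ∧ |t - s| < r}.Nonempty := by
    intro r s hr
    obtain ⟨t, x, h1, h2⟩ := hdense s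
    exact ⟨x, t, h1, lt_of_lt_of_le h2 hr⟩
  have hmem : ∀ {r s t x}, (t, x) ∈ S → |t - s| < r → x ≤ uenv S r s := fun {r s t x} h1 h2 =>
    le_csSup (hbdd r s) ⟨t, h1, h2⟩
  have hlow : ∀ r s, R ≤ r → -B ≤ uenv S r s := by
    intro r s hr
    obtain ⟨x, t, h1, h2⟩ := hne r s hr
    exact (abs_le.1 (hB t x h1)).1.trans (hmem h1 h2)
  have hup : ∀ r s, R ≤ r → uenv S r s ≤ B := fun r s hr =>
    csSup_le (hne r s hr) (by rintro x ⟨t, ht, -⟩; exact (abs_le.1 (hB t x ht)).2)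
  have hrm : ∀ {r r' s s'}, R ≤ r → r + |s - s'| ≤ r' → uenv S r s ≤ uenv S r' s' := by
    intro r r' s s' hr hrr
    refine csSup_le (hne r s hr) ?_
    rintro x ⟨t, ht, hts⟩
    refine hmem ht (lt_of_lt_of_le ?_ hrr)
    have := abs_sub_le t s s'
    linarith
  have hper : ∀ r s, uenv S r (s + 1) = uenv S r s := by
    intro r s
    unfold uenv
    congr 1
    ext x
    constructor
    · rintro ⟨t, ht, h⟩
      refine ⟨t + ((-1 : ℤ) : ℝ), hS t x ht (-1), ?_⟩
      rw [show t + ((-1 : ℤ) : ℝ) - s = t - (s + 1) by push_cast; ring]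
      exact h
    · rintro ⟨t, ht, h⟩
      refine ⟨t + ((1 : ℤ) : ℝ), hS t x ht 1, ?_⟩
      rw [show t + ((1 : ℤ) : ℝ) - (s + 1) = t - s by push_cast; ring]
      exact h
  have hMu : ∀ r s, R ≤ r → r ≤ 2 * R → M s (uenv S r s) + η ≤ uenv S r (s + α) := by
    intro r s hr hr2
    have hcs : Continuous (M s) := hc.comp (continuous_const.prodMk continuous_id)
    have hcl : IsClosed {x | M s x + η ≤ uenv S r (s + α)} :=
      isClosed_le (hcs.add continuous_const) continuous_const
    refine closure_minimal ?_ hcl (csSup_mem_closure (hne r s hr) (hbdd r s))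
    rintro x ⟨t, ht, hts⟩
    obtain ⟨x', h1, h2⟩ := hstep t x s ht (lt_of_lt_of_le hts hr2)
    exact h2.trans (hmem h1 (by rwa [show t + α - (s + α) = t - s by ring]))
  have hIoo : (Set.Ioo R (2 * R)).Nonempty := Set.nonempty_Ioo.2 (by linarith)
  have vbdd : ∀ s, BddBelow ((fun r => uenv S r s) '' Set.Ioo R (2 * R)) := fun s =>
    ⟨-B, by rintro _ ⟨r, hr, rfl⟩; exact hlow r s hr.1.le⟩
  have vle : ∀ {r s}, R < r → r < 2 * R → venv S R s ≤ uenv S r s := fun {r s} h1 h2 =>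
    csInf_le (vbdd s) ⟨r, ⟨h1, h2⟩, rfl⟩
  have ule : ∀ s, uenv S R s ≤ venv S R s := fun s =>
    le_csInf (hIoo.image _) (by
      rintro _ ⟨r, hr, rfl⟩; exact hrm le_rfl (by simpa using hr.1.le))
  have hMv : ∀ s, M s (venv S R s) + η ≤ venv S R (s + α) := by
    intro s
    refine le_csInf (hIoo.image _) ?_
    rintro _ ⟨r, hr, rfl⟩
    have := (hm s).monotone (vle (s := s) hr.1 hr.2)
    have := hMu r s hr.1.le hr.2.le
    dsimp only
    linarith
  have vper : ∀ s, venv S R (s + 1) = venv S R s := by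
    intro s; unfold venv; congr 1; ext x; simp [hper]
  have vusc : ∀ s y, venv S R s < y → ∀ᶠ s' in 𝓝 s, venv S R s' < y := by
    intro s y hy
    obtain ⟨_, ⟨r, hr, rfl⟩, hry⟩ := exists_lt_of_csInf_lt (hIoo.image _) hy
    have h1 := hr.1
    have h2 := hr.2
    filter_upwards [Metric.ball_mem_nhds s (show 0 < (r - R) / 2 by linarith)] with s' hs'
    rw [Metric.mem_ball, Real.dist_eq] at hs'
    refine lt_of_le_of_lt ((vle (r := (r + R) / 2) (by linarith) (by linarith)).trans ?_) hry
    exact hrm (by linarith) (by linarith)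
  have ulsc : ∀ s y, y < uenv S R s → ∀ᶠ s' in 𝓝 s, y < uenv S R s' := by
    intro s y hy
    obtain ⟨x, ⟨t, ht, hts⟩, hxy⟩ := exists_lt_of_lt_csSup (hne R s le_rfl) hy
    filter_upwards [Metric.ball_mem_nhds s (show 0 < R - |t - s| by linarith)] with s' hs'
    rw [Metric.mem_ball, Real.dist_eq, abs_sub_comm] at hs'
    refine lt_of_lt_of_le hxy (hmem ht ?_)
    have := abs_sub_le t s s'
    linarith
  have hjump : ∀ s, uenv S R s + η ≤ venv S R s →
      (∀ s', s < s' → s' < s + R → uenv S R s + η / 2 ≤ uenv S R s') ∨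
      (∀ s', s - R < s' → s' < s → uenv S R s + η / 2 ≤ uenv S R s') := by
    intro s hs
    have hpt : ∀ r, R < r → r < 2 * R → ∃ t x, (t, x) ∈ S ∧ |t - s| < r ∧ R ≤ |t - s| ∧
        uenv S R s + η / 2 < x := by
      intro r h1 h2
      have h3 : uenv S R s + η / 2 < uenv S r s := by
        have := vle (s := s) h1 h2
        linarith
      obtain ⟨x, ⟨t, ht, hts⟩, hx⟩ := exists_lt_of_lt_csSup (hne r s h1.le) h3
      refine ⟨t, x, ht, hts, ?_, hx⟩
      by_contra hlt
      have := hmem ht (not_le.1 hlt)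
      linarith
    by_cases hr : ∀ r, R < r → r < 2 * R → ∃ t x, (t, x) ∈ S ∧ |t - s| < r ∧ R ≤ t - s ∧
        uenv S R s + η / 2 < x
    · left
      intro s' h1 h2
      obtain ⟨t, x, ht, h3, h4, h5⟩ := hr (R + (s' - s)) (by linarith) (by linarith)
      refine h5.le.trans (hmem ht ?_)
      rw [abs_lt] at h3 ⊢
      constructor <;> linarith
    · right
      push Not at hr
      obtain ⟨r0, hr1, hr2, hr3⟩ := hr
      intro s' h1 h2
      have q1 : min r0 (R + (s - s')) ≤ r0 := min_le_left _ _
      have q2 : min r0 (R + (s - s')) ≤ R + (s - s') := min_le_right _ _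
      obtain ⟨t, x, ht, h3, h4, h5⟩ := hpt (min r0 (R + (s - s')))
        (lt_min hr1 (by linarith)) (by linarith)
      have h6 : ¬ R ≤ t - s := fun h =>
        absurd (hr3 t x ht (by linarith) h) (not_le.2 h5)
      refine h5.le.trans (hmem ht ?_)
      have h7 : R ≤ -(t - s) := by
        rcases le_abs.1 h4 with h | h
        · exact absurd h h6
        · exact h
      rw [abs_lt] at h3 ⊢
      constructor <;> linarith
  set V := itM M α (venv S R) with hV
  have hvv : ∀ s, M (s - α) (venv S R (s - α)) ≤ venv S R s := by
    intro s
    have := hMv (s - α)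
    rw [sub_add_cancel] at this
    linarith
  have Vusc := itM_usc (α := α) hc hm vusc
  have Vper := itM_per (α := α) hp vper
  have Vanti : ∀ s {N N' : ℕ}, N ≤ N' → V N' s ≤ V N s := fun s {N N'} h => itM_anti hm hvv s h
  have main : ∃ N0, ∀ s, V N0 s < uenv S R s := by
    by_contra hcon
    push Not at hcon
    have hclosed : ∀ N, IsClosed {s | uenv S R s ≤ V N s} := by
      intro N
      rw [← isOpen_compl_iff, isOpen_iff_eventually]
      intro s hs
      have hs' : V N s < uenv S R s := not_le.1 hs
      obtain ⟨y, h1, h2⟩ := exists_between hs'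
      filter_upwards [Vusc N s y h1, ulsc s y h2] with s' k1 k2
      exact not_le.2 (k1.trans k2)
    obtain ⟨s0, hs0⟩ := IsCompact.nonempty_iInter_of_sequence_nonempty_isCompact_isClosed
      (fun N => Set.Icc (0 : ℝ) 1 ∩ {s | uenv S R s ≤ V N s})
      (by
        intro N s hs
        exact ⟨hs.1, le_trans hs.2 (Vanti s (Nat.le_succ N))⟩)
      (by
        intro N
        obtain ⟨s, hs⟩ := hcon N
        refine ⟨Int.fract s, ⟨Int.fract_nonneg s, (Int.fract_lt_one s).le⟩, ?_⟩
        have e1 := per_int (hper R) (Int.fract s) ⌊s⌋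
        have e2 := per_int (Vper N) (Int.fract s) ⌊s⌋
        rw [Int.fract_add_floor] at e1 e2
        change uenv S R (Int.fract s) ≤ V N (Int.fract s)
        rw [← e1, hV, ← e2]
        exact hs)
      (isCompact_Icc.inter_right (hclosed 0))
      (fun N => isClosed_Icc.inter (hclosed N))
    have hP0 : ∀ N, uenv S R s0 ≤ V N s0 := fun N => (Set.mem_iInter.1 hs0 N).2
    have hPa : ∀ s, (∀ N, uenv S R s ≤ V N s) → ∀ N, uenv S R (s - α) ≤ V N (s - α) := by
      intro s hs N
      by_contra hlt
      have h1 := hm (s - α) (not_le.1 hlt)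
      have h2 := hs (N + 1)
      have h3 := hMu R (s - α) le_rfl (by linarith)
      rw [sub_add_cancel] at h3
      change uenv S R s ≤ M (s - α) (V N (s - α)) at h2
      linarith
    have hPn : ∀ (n : ℕ) (i : ℤ), ∀ N, uenv S R (s0 + n * (-α) + i) ≤ V N (s0 + n * (-α) + i) := by
      intro n i N
      rw [per_int (hper R), hV, per_int (Vper N)]
      induction n generalizing N with
      | zero => simpa using hP0 N
      | succ n ih =>
        have := hPa _ ih N
        rw [show s0 + ((n + 1 : ℕ) : ℝ) * (-α) = s0 + n * (-α) - α by push_cast; ring]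
        exact this
    have hZ : ∀ a b, a < b → ∃ s, a < s ∧ s < b ∧ uenv S R s + η ≤ venv S R s := by
      intro a b hab
      obtain ⟨n, i, h1, h2⟩ := dense_real hα.neg s0 a b hab
      refine ⟨_, h1, h2, ?_⟩
      have h3 := hPn n i 1
      have h4 := hMv (s0 + n * (-α) + i - α)
      rw [sub_add_cancel] at h4
      change uenv S R _ ≤ M _ (venv S R _) at h3
      linarith
    set A := {x | ∃ s, 0 < s ∧ s < R ∧ uenv S R s + η ≤ venv S R s ∧ uenv S R s = x} with hA
    have hAne : A.Nonempty := by
      obtain ⟨s, h1, h2, h3⟩ := hZ 0 R hR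
      exact ⟨_, s, h1, h2, h3, rfl⟩
    have hAb : BddAbove A := ⟨B, by rintro _ ⟨s, -, -, -, rfl⟩; exact hup R s le_rfl⟩
    obtain ⟨_, ⟨s, h1, h2, h3, rfl⟩, h4⟩ := exists_lt_of_lt_csSup hAne
      (show sSup A - η / 2 < sSup A by linarith)
    rcases hjump s h3 with hj | hj
    · obtain ⟨s', k1, k2, k3⟩ := hZ s R h2
      have := hj s' k1 (by linarith)
      have := le_csSup hAb (show uenv S R s' ∈ A from ⟨s', by linarith, k2, k3, rfl⟩)
      linarith
    · obtain ⟨s', k1, k2, k3⟩ := hZ 0 s h1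
      have := hj s' (by linarith) k2
      have := le_csSup hAb (show uenv S R s' ∈ A from ⟨s', k1, by linarith, k3, rfl⟩)
      linarith
  obtain ⟨N0, hN0⟩ := main
  have hN1 : ∀ s, V (N0 + 1) s < uenv S R s - η := by
    intro s
    have h1 := hm (s - α) (hN0 (s - α))
    have h2 := hMu R (s - α) le_rfl (by linarith)
    rw [sub_add_cancel] at h2
    change M (s - α) (V N0 (s - α)) < _
    linarith
  refine ⟨N0 + 1, fun N hN => ?_⟩
  obtain ⟨w, hw⟩ := insertion (u := fun s => uenv S R s - η) (Vusc N)
    (fun s y hy => by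
      filter_upwards [ulsc s (y + η) (by linarith)] with s' hs'
      linarith)
    (Vper N) (fun s => by simp only [hper R])
    (fun s => lt_of_le_of_lt (Vanti s hN) (hN1 s))
  exact ⟨w, fun s => ⟨lt_of_le_of_lt (itM_mono hm ule N s) (hw s).1, (hw s).2⟩⟩

/-- normalized return map -/
def Mn (ω : ℝ) (F : T1 → ℝ → ℝ) (Q p : ℕ) (k T : ℤ) (t X : ℝ) : ℝ :=
  fiberIter ω F Q ((p * t : ℝ) : T1) (X + k * t) - T - k * (t + Q * ω / p)

theorem Mn_cont {ω : ℝ} {F : T1 → ℝ → ℝ} (hF : IsQpfLift ω F) (Q p : ℕ) (k T : ℤ) :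
    Continuous fun z : ℝ × ℝ => Mn ω F Q p k T z.1 z.2 := by
  unfold Mn
  have h1 : Continuous fun z : ℝ × ℝ => (((p * z.1 : ℝ) : T1), z.2 + k * z.1) := by
    refine Continuous.prodMk ?_ (by fun_prop)
    exact (AddCircle.continuous_mk' (1 : ℝ)).comp (by fun_prop)
  have h2 := (fi_cont hF Q).comp h1
  have h3 : Continuous fun z : ℝ × ℝ => (T : ℝ) + k * (z.1 + Q * ω / p) := by fun_prop
  refine (h2.sub h3).congr fun z => ?_
  change fiberIter ω F Q ((p * z.1 : ℝ) : T1) (z.2 + k * z.1) - _ = _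
  ring

theorem Mn_mono {ω : ℝ} {F : T1 → ℝ → ℝ} (hF : IsQpfLift ω F) (Q p : ℕ) (k T : ℤ) (t : ℝ) :
    StrictMono (Mn ω F Q p k T t) := by
  intro X Y h
  have := fi_strictMono hF Q ((p * t : ℝ) : T1) (show X + k * t < Y + k * t by linarith)
  unfold Mn
  linarith

theorem coe_add_int (a : ℝ) (j : ℤ) : ((a + j : ℝ) : T1) = (a : T1) :=
  coe_eq_iff'.2 ⟨j, rfl⟩

theorem Mn_per {ω : ℝ} {F : T1 → ℝ → ℝ} (hF : IsQpfLift ω F) (Q p : ℕ) (k T : ℤ) (t X : ℝ) :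
    Mn ω F Q p k T (t + 1) X = Mn ω F Q p k T t X := by
  unfold Mn
  have h1 : ((p * (t + 1) : ℝ) : T1) = ((p * t : ℝ) : T1) := by
    have := coe_add_int (p * t) p
    rw [← this]; congr 1; push_cast; ring
  rw [h1, show X + k * (t + 1) = (X + k * t) + k by ring, fi_int hF]
  ring

theorem Mn_int {ω : ℝ} {F : T1 → ℝ → ℝ} (hF : IsQpfLift ω F) (Q p : ℕ) (k T : ℤ) (t X : ℝ)
    (j : ℤ) : Mn ω F Q p k T t (X + j) = Mn ω F Q p k T t X + j := by
  unfold Mn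
  rw [show X + j + k * t = (X + k * t) + j by ring, fi_int hF]
  ring

theorem Mn_unif {ω : ℝ} {F : T1 → ℝ → ℝ} (hF : IsQpfLift ω F) (Q p : ℕ) (k T : ℤ) {e : ℝ}
    (he : 0 < e) : ∃ δ > 0, ∀ t s X, |t - s| < δ →
      |Mn ω F Q p k T t X - Mn ω F Q p k T s X| < e := by
  have hu := ((isCompact_Icc (a := (-1 : ℝ)) (b := 2)).prod
    (isCompact_Icc (a := (0 : ℝ)) (b := 1))).uniformContinuousOn_of_continuous
      (Mn_cont hF Q p k T).continuousOn
  rw [Metric.uniformContinuousOn_iff] at hu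
  obtain ⟨δ, hδ, h⟩ := hu e he
  refine ⟨min δ 1, by positivity, fun t s X hts => ?_⟩
  have h1 := lt_of_lt_of_le hts (min_le_left _ _)
  have h2 := abs_lt.1 (lt_of_lt_of_le hts (min_le_right _ _))
  have f1 := Int.fract_nonneg t
  have f2 := Int.fract_lt_one t
  have f3 : Int.fract t = t - ⌊t⌋ := rfl
  have h3 := h (t - ⌊t⌋, Int.fract X)
    ⟨⟨by simp only; linarith, by simp only; linarith⟩, Int.fract_nonneg _, (Int.fract_lt_one _).le⟩
    (s - ⌊t⌋, Int.fract X)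
    ⟨⟨by simp only; linarith, by simp only; linarith⟩, Int.fract_nonneg _, (Int.fract_lt_one _).le⟩
    (by
      rw [Prod.dist_eq, dist_self, Real.dist_eq, max_eq_left (abs_nonneg _)]
      change |t - ⌊t⌋ - (s - ⌊t⌋)| < δ
      rwa [sub_sub_sub_cancel_right])
  rw [Real.dist_eq] at h3
  have e1 : ∀ t', Mn ω F Q p k T t' X = Mn ω F Q p k T (t' - ⌊t⌋) (Int.fract X) + ⌊X⌋ := by
    intro t'
    have q1 := per_int (w := fun t => Mn ω F Q p k T t X) (fun s => Mn_per hF Q p k T s X)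
      (t' - ⌊t⌋) ⌊t⌋
    rw [sub_add_cancel] at q1
    rw [q1, ← Mn_int hF, Int.fract_add_floor]
  rw [e1 t, e1 s]
  simpa using h3

theorem itM_Mn {ω : ℝ} {F : T1 → ℝ → ℝ} (hF : IsQpfLift ω F) {Q p : ℕ} (hp : 1 ≤ p) (k T : ℤ)
    (w : ℝ → ℝ) (N : ℕ) (s : ℝ) :
    itM (Mn ω F Q p k T) (Q * ω / p) w N (s + N * (Q * ω / p))
      = fiberIter ω F (Q * N) ((p * s : ℝ) : T1) (w s + k * s)
        - N * T - k * (s + N * (Q * ω / p)) := by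
  have hp0 : (p : ℝ) ≠ 0 := by positivity
  induction N with
  | zero => simp [itM, fiberIter]
  | succ N ih =>
    simp only [itM]
    rw [show s + ((N + 1 : ℕ) : ℝ) * (Q * ω / p) - Q * ω / p = s + N * (Q * ω / p) by
      push_cast; ring, ih]
    unfold Mn
    rw [show Q * (N + 1) = Q * N + Q by ring, fi_add]
    have e1 : ((p * (s + N * (Q * ω / p)) : ℝ) : T1) = ((p * s : ℝ) : T1) + (Q * N) • (ω : T1) := by
      rw [← AddCircle.coe_nsmul, ← AddCircle.coe_add]
      congr 1
      rw [nsmul_eq_mul]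
      push_cast
      field_simp
    rw [e1]
    set Y := fiberIter ω F (Q * N) ((p * s : ℝ) : T1) (w s + k * s)
    rw [show Y - N * T - k * (s + N * (Q * ω / p)) + k * (s + N * (Q * ω / p))
      = Y + ((-(N * T) : ℤ) : ℝ) by push_cast; ring, fi_int hF]
    push_cast
    ring

theorem itM_neg (M : ℝ → ℝ → ℝ) (α : ℝ) (w : ℝ → ℝ) (N : ℕ) (s : ℝ) :
    itM (fun t x => -M t (-x)) α w N s = - itM M α (fun s => - w s) N s := by
  induction N generalizing s with
  | zero => simp [itM]
  | succ N ih => simp only [itM]; rw [ih]; simp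


theorem normalized {ω : ℝ} (hω : Irrational ω) {F : T1 → ℝ → ℝ} (hF : IsQpfLift ω F)
    {e ρ C : ℝ} (he : 0 < e) (hC : 0 ≤ C)
    (hup : ∀ (n : ℕ) (θ : T1) (x : ℝ), fiberIter ω (shf F (2 * e)) n θ x ≤ x + n * ρ + C)
    (hlow : ∀ (n : ℕ) (θ : T1) (x : ℝ), x + n * ρ - C ≤ fiberIter ω (shf F (-e)) n θ x)
    {Q p : ℕ} {k T : ℤ} (hQ : 1 ≤ Q) (hp : 1 ≤ p) (hrel : Q * ρ = k * (Q * ω / p) + T) :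
    ∃ N : ℕ, 1 ≤ N ∧ ∃ lh uh : C(T1, ℝ),
      (∀ t, lh t < uh t) ∧
      (∀ s X : ℝ, lh (s : T1) ≤ X → X ≤ uh (s : T1) →
        lh ((s + N * (Q * ω / p) : ℝ) : T1) < fiberIter ω F (Q * N) ((p * s : ℝ) : T1) (X + k * s)
          - N * T - k * (s + N * (Q * ω / p)) ∧
        fiberIter ω F (Q * N) ((p * s : ℝ) : T1) (X + k * s)
          - N * T - k * (s + N * (Q * ω / p)) < uh ((s + N * (Q * ω / p) : ℝ) : T1)) ∧
      (∀ (s : ℝ) (i j : ℤ), 0 < p * j - k * i →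
        uh (s : T1) < lh ((s - i / p : ℝ) : T1) + (j - k * i / p)) := by
  have hpR : (1 : ℝ) ≤ p := by exact_mod_cast hp
  have hp0 : (0 : ℝ) < p := by linarith
  have hG := shf_lift hF (-e)
  have hF0 : shf F 0 = F := by funext θ x; simp [shf]
  set g := gfn ω (shf F (-e)) ρ with hg
  set κ : ℝ := 1 / (2 * p) with hκdef
  have hκ : 0 < κ := by positivity
  have hκp : p * (2 * κ) = 1 := by rw [hκdef]; field_simp
  obtain ⟨δ, hδ, θs, cs, hnf⟩ := nonfail hF he hup hlow hκ
  obtain ⟨vs, rfl⟩ : ∃ vs : ℝ, (vs : T1) = θs := QuotientAddGroup.mk_surjective θs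
  set α : ℝ := Q * ω / p with hα
  have hαi : Irrational α := by
    have h1 : Irrational ((Q : ℝ) * ω) := hω.natCast_mul (by omega)
    exact h1.div_natCast (by omega)
  have hpα : p * α = Q * ω := by rw [hα]; field_simp
  set η : ℝ := e / 2 with hη
  have hη0 : 0 < η := by positivity
  obtain ⟨δ1, hδ1, hun⟩ := Mn_unif hF Q p k T hη0
  set M := Mn ω F Q p k T with hM
  -- the radius
  obtain ⟨R, hR, hR1, hR2, hR3, hR4⟩ : ∃ R : ℝ, 0 < R ∧ 2 * R ≤ δ1 ∧ p * (2 * R) ≤ δ ∧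
      |(k : ℝ)| * (2 * R) ≤ η ∧ |(k : ℝ)| * (2 * R) ≤ κ := by
    have hk : 0 ≤ |(k : ℝ)| := abs_nonneg _
    set r := min (min (δ1 / 2) (δ / (2 * p))) (min η κ / (2 * (|(k : ℝ)| + 1))) with hr
    have r1 : r ≤ δ1 / 2 := (min_le_left _ _).trans (min_le_left _ _)
    have r2 : r ≤ δ / (2 * p) := (min_le_left _ _).trans (min_le_right _ _)
    have r3 : r ≤ min η κ / (2 * (|(k : ℝ)| + 1)) := min_le_right _ _
    have r0 : 0 < r := by positivity
    rw [le_div_iff₀ (by positivity)] at r2 r3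
    have m1 : min η κ ≤ η := min_le_left _ _
    have m2 : min η κ ≤ κ := min_le_right _ _
    refine ⟨r, r0, by linarith, by linarith, by nlinarith, by nlinarith⟩
  -- upper sequence
  set y : ℕ → ℝ := fun m => fiberIter ω (shf F e) m (vs : T1) (g cs vs) with hy
  set tt : ℕ → ℝ := fun n => (vs + n * (Q * ω)) / p with htt
  set XX : ℕ → ℝ := fun n => y (Q * n) - n * T - k * tt n with hXX
  set a0 : ℝ := cs - k * vs / p with ha0
  have hptt : ∀ n, p * tt n = vs + n * (Q * ω) := by
    intro n; rw [htt]; field_simp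
  have htts : ∀ n, tt (n + 1) = tt n + α := by
    intro n; simp only [htt, hα]; push_cast; field_simp; ring
  have htt0 : ∀ n, tt n = tt 0 + n * α := by
    intro n; simp only [htt, hα]; push_cast; field_simp; ring
  have hcoe : ∀ n, ((p * tt n : ℝ) : T1) = (vs : T1) + (Q * n) • (ω : T1) := by
    intro n
    rw [hptt, ← AddCircle.coe_nsmul, ← AddCircle.coe_add, nsmul_eq_mul]
    congr 2; push_cast; ring
  have hcn : ∀ n : ℕ, cs + ((Q * n : ℕ) : ℝ) * ρ = a0 + k * tt n + ((n * T : ℤ) : ℝ) := by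
    intro n
    have e1 : ((Q * n : ℕ) : ℝ) * ρ = n * (Q * ρ) := by push_cast; ring
    rw [e1, hrel, htt0 n]
    simp only [ha0, htt]
    push_cast
    field_simp
    ring
  have Y2 : ∀ m : ℕ, g (cs + m * ρ) ((vs : T1) + m • (ω : T1)) ≤ y m := fun m =>
    (gfn_iter hG hlow m cs vs).trans (fi_le hF (by linarith) m _ le_rfl)
  have Yup : ∀ m : ℕ, y m ≤ cs + m * ρ + C := by
    intro m
    have h1 := fi_le hF (show e ≤ 2 * e by linarith) m (vs : T1) (le_refl (g cs vs))
    have h2 := hup m vs (g cs vs)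
    have h3 := gfn_le hlow cs (vs : T1)
    simp only [hy]
    linarith
  have XXlo : ∀ n, a0 - C ≤ XX n := by
    intro n
    have h1 := Y2 (Q * n)
    have h2 := gfn_ge hlow (cs + ((Q * n : ℕ) : ℝ) * ρ) ((vs : T1) + (Q * n) • (ω : T1))
    have h3 := hcn n
    push_cast at h3
    simp only [hXX]
    push_cast at h1 h2
    linarith
  have XXhi : ∀ n, XX n ≤ a0 + C := by
    intro n
    have h1 := Yup (Q * n)
    have h3 := hcn n
    push_cast at h1 h3
    simp only [hXX]
    linarith
  -- lower function
  set L : ℝ → ℝ := fun t => g (a0 + k * t) ((p * t : ℝ) : T1) - k * t with hL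
  have Llo : ∀ t, a0 - C ≤ L t := by
    intro t
    have := gfn_ge hlow (a0 + k * t) ((p * t : ℝ) : T1)
    simp only [hL]; linarith
  have Lhi : ∀ t, L t ≤ a0 := by
    intro t
    have := gfn_le hlow (a0 + k * t) ((p * t : ℝ) : T1)
    simp only [hL]; linarith
  have Lper : ∀ t, L (t + 1) = L t := by
    intro t
    simp only [hL]
    have h1 : ((p * (t + 1) : ℝ) : T1) = ((p * t : ℝ) : T1) := by
      have := coe_add_int (p * t) p
      rw [← this]; congr 1; push_cast; ring
    rw [h1, show a0 + k * (t + 1) = a0 + k * t + k by ring, hg, gfn_int hG hlow]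
    ring
  have LX : ∀ n, L (tt n) ≤ XX n := by
    intro n
    have h1 := Y2 (Q * n)
    rw [hcn n, hg, gfn_int hG hlow, ← hcoe, ← hg] at h1
    simp only [hL, hXX]
    push_cast at h1
    linarith
  have Lstep : ∀ t, L (t + α) + e ≤ M t (L t) := by
    intro t
    obtain ⟨q, rfl⟩ : ∃ q, Q = q + 1 := ⟨Q - 1, by omega⟩
    have h1 := gfn_iter hG hlow (q + 1) (a0 + k * t) ((p * t : ℝ) : T1)
    have h2 := fi_gap hF (show -e ≤ 0 by linarith) q ((p * t : ℝ) : T1)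
      (le_refl (g (a0 + k * t) ((p * t : ℝ) : T1)))
    rw [hF0] at h2
    have h3 : ((p * t : ℝ) : T1) + (q + 1) • (ω : T1) = ((p * (t + α) : ℝ) : T1) := by
      rw [← AddCircle.coe_nsmul, ← AddCircle.coe_add, nsmul_eq_mul, mul_add, hpα]
    rw [h3, hrel, show a0 + k * t + (k * α + T) = a0 + k * (t + α) + T by ring,
      gfn_int hG hlow] at h1
    simp only [hL, hM, Mn]
    rw [show g (a0 + k * t) ((p * t : ℝ) : T1) - k * t + k * t
      = g (a0 + k * t) ((p * t : ℝ) : T1) by ring]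
    rw [← hα]
    linarith
  have Xstep : ∀ n, M (tt n) (XX n) + e ≤ XX (n + 1) := by
    intro n
    have h0 : y (Q * (n + 1)) = fiberIter ω (shf F e) Q ((p * tt n : ℝ) : T1) (y (Q * n)) := by
      simp only [hy]
      rw [show Q * (n + 1) = Q * n + Q by ring, fi_add, hcoe]
    obtain ⟨q, hq⟩ : ∃ q, Q = q + 1 := ⟨Q - 1, by omega⟩
    have h2 := fi_gap hF (show 0 ≤ e by linarith) q ((p * tt n : ℝ) : T1) (le_refl (y (Q * n)))
    rw [hF0, ← hq] at h2
    have h4 := fi_int hF Q ((p * tt n : ℝ) : T1) (y (Q * n)) (-(n * T))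
    have h5 : XX n + k * tt n = y (Q * n) + ((-(n * T) : ℤ) : ℝ) := by
      simp only [hXX]; push_cast; ring
    simp only [hM, Mn]
    rw [h5, h4, ← hα, ← htts]
    simp only [hXX]
    rw [h0]
    push_cast
    linarith
  -- the two point sets
  set Su : Set (ℝ × ℝ) := {z | ∃ (n : ℕ) (i : ℤ), z.1 = tt n + i ∧ z.2 = XX n} with hSu
  set Sl : Set (ℝ × ℝ) := {z | z.2 = - L z.1} with hSl
  have Lpi := per_int Lper
  have Mpi : ∀ (t : ℝ) (i : ℤ) (x : ℝ), M (t + i) x = M t x := fun t i x =>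
    per_int (w := fun t => M t x) (fun s => Mn_per hF Q p k T s x) t i
  obtain ⟨Nu, hNu⟩ := curve (S := Su) (R := R) (η := η) (B := |a0| + C) hαi
    (Mn_cont hF Q p k T) (Mn_mono hF Q p k T) (Mn_per hF Q p k T) hR hη0
    (by
      rintro t x ⟨n, i, h1, h2⟩ j
      exact ⟨n, i + j, by simp only at h1 ⊢; rw [h1]; push_cast; ring, h2⟩)
    (by
      rintro t x s ⟨n, i, h1, h2⟩ hts
      simp only at h1 h2
      subst h1 h2
      refine ⟨XX (n + 1), ⟨n + 1, i, by simp only; rw [htts]; ring, rfl⟩, ?_⟩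
      have h3 := hun _ _ (XX n) (lt_of_lt_of_le hts hR1)
      rw [Mpi] at h3
      have h4 := Xstep n
      have h5 := (abs_lt.1 h3).1
      change M s (XX n) + η ≤ XX (n + 1)
      linarith)
    (by
      rintro t x ⟨n, i, h1, h2⟩
      simp only at h2
      have := XXlo n
      have := XXhi n
      have := neg_abs_le a0
      have := le_abs_self a0
      rw [h2, abs_le]
      constructor <;> linarith)
    (by
      intro s
      obtain ⟨n, i, h1, h2⟩ := dense_real hαi (tt 0) (s - R) (s + R) (by linarith)
      rw [← htt0] at h1 h2
      refine ⟨tt n + i, XX n, ⟨n, i, rfl, rfl⟩, ?_⟩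
      rw [abs_lt]; constructor <;> linarith)
  obtain ⟨Nl, hNl⟩ := curve (M := fun t x => - M t (-x)) (S := Sl) (R := R) (η := η)
    (B := |a0| + C) hαi
    (((Mn_cont hF Q p k T).comp (continuous_fst.prodMk continuous_snd.neg)).neg)
    (fun t x x' h => neg_lt_neg (Mn_mono hF Q p k T t (neg_lt_neg h)))
    (fun t x => by simp only [hM]; rw [Mn_per hF]) hR hη0
    (by
      intro t x h j
      change x = - L (t + j)
      rw [Lpi]; exact h)
    (by
      intro t x s h hts
      have h : x = - L t := h
      subst h
      refine ⟨- L (t + α), rfl, ?_⟩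
      have h3 := hun _ _ (L t) (lt_of_lt_of_le hts hR1)
      have h4 := Lstep t
      have h5 := (abs_lt.1 h3).2
      simp only [neg_neg]
      linarith)
    (by
      intro t x h
      have h : x = - L t := h
      have := Llo t
      have := Lhi t
      have := neg_abs_le a0
      have := le_abs_self a0
      rw [h, abs_neg, abs_le]
      constructor <;> linarith)
    (by
      intro s
      exact ⟨s, - L s, rfl, by simpa using hR⟩)
  set N := max (max Nu Nl) 1 with hN
  obtain ⟨wu, hwu⟩ := hNu N ((le_max_left _ _).trans (le_max_left _ _))
  obtain ⟨wl, hwl⟩ := hNl N ((le_max_right _ _).trans (le_max_left _ _))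
  set u := uenv Su R with hu
  set l := fun s => - uenv Sl R s with hl
  have uge : ∀ {s t : ℝ} {n : ℕ} {i : ℤ}, t = tt n + i → |t - s| < R → XX n ≤ u s := by
    intro s t n i h1 h2
    exact le_csSup ⟨a0 + C, by rintro x ⟨t, ⟨n, i, -, h⟩, -⟩; simp only at h; rw [h]; exact XXhi n⟩
      ⟨t, ⟨n, i, h1, rfl⟩, h2⟩
  have lle : ∀ {s t : ℝ}, |t - s| < R → l s ≤ L t := by
    intro s t h
    have : - L t ≤ uenv Sl R s :=
      le_csSup ⟨-(a0 - C), by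
        rintro x ⟨t, h, -⟩
        have h : x = - L t := h
        have := Llo t
        linarith⟩ ⟨t, rfl, h⟩
    simp only [hl]
    linarith
  have hlu : ∀ s, l s ≤ u s := by
    intro s
    obtain ⟨n, i, h1, h2⟩ := dense_real hαi (tt 0) (s - R) (s + R) (by linarith)
    rw [← htt0] at h1 h2
    have h3 : |tt n + i - s| < R := by rw [abs_lt]; constructor <;> linarith
    calc l s ≤ L (tt n + i) := lle h3
      _ = L (tt n) := Lpi _ _
      _ ≤ XX n := LX n
      _ ≤ u s := uge rfl h3
  have hm := Mn_mono hF Q p k T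
  have hwl1 : ∀ s : ℝ, - wl (s : T1) < itM M α l N s := by
    intro s
    have := (hwl s).1
    rw [itM_neg] at this
    change _ < itM M α (fun s => - uenv Sl R s) N s
    linarith
  have hwl2 : ∀ s : ℝ, l s + η < - wl (s : T1) := by
    intro s
    have := (hwl s).2
    simp only [hl]
    linarith
  refine ⟨N, le_max_right _ _, -wl, wu, ?_, ?_, ?_⟩
  · intro t
    induction t using QuotientAddGroup.induction_on with
    | H s =>
    have h1 := hwl1 s
    have h2 := itM_mono (α := α) hm hlu N s
    have h3 := (hwu s).1
    change - wl (s : T1) < wu (s : T1)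
    linarith
  · intro s X hX1 hX2
    change - wl (s : T1) ≤ X at hX1
    constructor
    · have h1 := hwl1 (s + N * α)
      have h2 := itM_mono (α := α) hm
        (show ∀ s : ℝ, l s ≤ - wl (s : T1) from fun s => by have := hwl2 s; linarith) N (s + N * α)
      rw [itM_Mn hF hp k T (fun s : ℝ => - wl (s : T1))] at h2
      have h3 := fi_mono hF (Q * N) ((p * s : ℝ) : T1)
        (show - wl (s : T1) + k * s ≤ X + k * s by linarith)
      change - wl _ < _
      linarith
    · have h1 := (hwu (s + N * α)).1
      have h2 := itM_mono (α := α) hm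
        (show ∀ s : ℝ, wu (s : T1) ≤ u s from fun s => by have := (hwu s).2; linarith) N (s + N * α)
      rw [itM_Mn hF hp k T (fun s : ℝ => wu (s : T1))] at h2
      have h3 := fi_mono hF (Q * N) ((p * s : ℝ) : T1)
        (show X + k * s ≤ wu (s : T1) + k * s by linarith)
      linarith
  · intro s i j hij
    have hijR : 2 * κ ≤ j - k * i / p := by
      have h1 : (1 : ℝ) ≤ p * j - k * i := by exact_mod_cast hij
      have h2 : (j : ℝ) - k * i / p = (p * j - k * i) * (2 * κ) := by
        rw [hκdef]; field_simp
      rw [h2]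
      nlinarith
    have key : ∀ t', |t' - (s - i / p)| < R → u s ≤ L t' + (j - k * i / p) + |(k : ℝ)| * (2 * R) := by
      intro t' ht'
      refine csSup_le ?_ ?_
      · obtain ⟨n, i, h1, h2⟩ := dense_real hαi (tt 0) (s - R) (s + R) (by linarith)
        rw [← htt0] at h1 h2
        exact ⟨XX n, tt n + i, ⟨n, i, rfl, rfl⟩, by rw [abs_lt]; constructor <;> linarith⟩
      · rintro x ⟨t, ⟨n, m, h1, h2⟩, hts⟩
        simp only at h1 h2
        subst h1 h2
        set d : ℝ := tt n - (t' + i / p - m) with hd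
        have hd2 : |d| < 2 * R := by
          rw [abs_lt] at ht' hts ⊢
          constructor <;> linarith
        have hkd : |(k : ℝ) * d| ≤ |(k : ℝ)| * (2 * R) := by
          rw [abs_mul]; gcongr
        have hkd' := abs_le.1 hkd
        have hdist : dist ((p * t' : ℝ) : T1) ((vs : T1) + (Q * n) • (ω : T1)) < δ := by
          rw [← hcoe, dist_eq_norm, ← AddCircle.coe_sub]
          have h3 : ((p * t' - p * tt n : ℝ) : T1) = ((- (p * d) : ℝ) : T1) := by
            refine coe_eq_iff'.2 ⟨p * m - i, ?_⟩
            rw [hd]; push_cast; field_simp; ring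
          rw [h3, UnitAddCircle.norm_eq]
          have h4 := round_le (-(p * d)) 0
          rw [Int.cast_zero, sub_zero, abs_neg, abs_mul, abs_of_pos hp0] at h4
          nlinarith
        have h5 := hnf (Q * n) _ hdist
        have h6 : cs + κ + ((Q * n : ℕ) : ℝ) * ρ ≤ a0 + k * t' + ((j - k * m + n * T : ℤ) : ℝ) := by
          have := hcn n
          have h7 : (k : ℝ) * tt n = k * t' + k * i / p - k * m + k * d := by
            rw [hd]; ring
          push_cast at this ⊢
          linarith
        have h8 := h5.trans (gfn_mono hG hlow h6 _)
        rw [gfn_int hG hlow] at h8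
        simp only [hXX, hL]
        have h7 : (k : ℝ) * tt n = k * t' + k * i / p - k * m + k * d := by
          rw [hd]; ring
        change y (Q * n) ≤ g (a0 + k * t') _ + _ at h8
        push_cast at h8
        linarith
    have h1 := (hwu s).2
    have h2 := hwl2 (s - i / p)
    have h3 : u s - (j - k * i / p) - |(k : ℝ)| * (2 * R) ≤ l (s - i / p) := by
      simp only [hl]
      have : uenv Sl R (s - i / p) ≤ -(u s - (j - k * i / p) - |(k : ℝ)| * (2 * R)) := by
        refine csSup_le ⟨- L (s - i / p), s - i / p, rfl, by simpa using hR⟩ ?_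
        rintro x ⟨t', h, ht'⟩
        have h : x = - L t' := h
        have := key t' ht'
        linarith
      linarith
    change _ < - wl _ + _
    linarith

theorem rho_rel {ω : ℝ} (hω : Irrational ω) {F : T1 → ℝ → ℝ} (hF : IsQpfLift ω F)
    {e ρ C : ℝ} (he : 0 < e)
    (hup : ∀ (n : ℕ) (θ : T1) (x : ℝ), fiberIter ω (shf F (2 * e)) n θ x ≤ x + n * ρ + C)
    (hlow : ∀ (n : ℕ) (θ : T1) (x : ℝ), x + n * ρ - C ≤ fiberIter ω (shf F (-e)) n θ x) :
    ∃ (Q p : ℕ) (k T : ℤ), 1 ≤ Q ∧ 1 ≤ p ∧ IsCoprime (p : ℤ) k ∧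
      Q * ρ = k * (Q * ω / p) + T := by
  have hG := shf_lift hF (-e)
  have hκ : 0 < e / 2 := by positivity
  obtain ⟨δ, hδ, θs, cs, hnf⟩ := nonfail hF he hup hlow hκ
  have hns := no_slow (ω := ω) (ρ := ρ) (C := C) (e := e) (κ := e / 2) (δ := δ)
    (g := gfn ω (shf F (-e)) ρ) (θs := θs) (cs := cs) he hκ (by linarith)
    (gfn_ge hlow) (gfn_le hlow) (fun c c' θ h => gfn_mono hG hlow h θ) (gfn_int hG hlow)
    (by
      intro n hn θ'' hd
      obtain ⟨q, rfl⟩ : ∃ q, n = q + 1 := ⟨n - 1, by omega⟩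
      have h1 := hnf (q + 1) θ'' hd
      have h2 := gfn_iter hG hlow (q + 1) cs θs
      have h3 := fi_gap hF (show -e ≤ e by linarith) q θs
        (le_refl (gfn ω (shf F (-e)) ρ cs θs))
      rw [show cs + ((q + 1 : ℕ) : ℝ) * ρ + e / 2 = cs + e / 2 + ((q + 1 : ℕ) : ℝ) * ρ by ring]
      linarith)
  obtain ⟨a, b, c, ha, hrel⟩ := rational_rel hω hκ
    (show 0 < δ / (2 * (e / 2)) by positivity) hns
  obtain ⟨a, b, c, ha, hrel⟩ : ∃ a b c : ℤ, 0 < a ∧ a * ρ = b * ω + c := by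
    rcases lt_or_gt_of_ne ha with h | h
    · refine ⟨-a, -b, -c, by omega, ?_⟩
      push_cast; linarith
    · exact ⟨a, b, c, h, hrel⟩
  lift a to ℕ using ha.le
  have ha' : (0 : ℝ) < a := by exact_mod_cast ha
  set σ : ℚ := (b : ℚ) / (a : ℚ) with hσ
  refine ⟨a, σ.den, σ.num, c, by omega, σ.pos, ?_, ?_⟩
  · rw [Int.isCoprime_iff_gcd_eq_one, Int.gcd_comm]
    simpa [Int.gcd] using σ.reduced
  · have h1 : ((σ.num : ℝ) / σ.den) = b / a := by
      have h2 : (σ : ℝ) = (σ.num : ℝ) / σ.den := Rat.cast_def σ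
      rw [← h2, hσ]; push_cast; rfl
    have h3 : (σ.num : ℝ) * (a * ω / σ.den) = (σ.num : ℝ) / σ.den * (a * ω) := by ring
    rw [h3, h1]
    have h4 : ((a : ℤ) : ℝ) = a := by simp
    rw [h4] at hrel
    rw [hrel]
    field_simp

theorem iter_proj {ω : ℝ} {F : T1 → ℝ → ℝ} {f : T1 × T1 → T1 × T1}
    (hproj : ∀ (θ : T1) (x : ℝ), f (θ, (x : T1)) = (θ + (ω : T1), ((F θ x : ℝ) : T1)))
    (n : ℕ) (θ : T1) (x : ℝ) :
    f^[n] (θ, (x : T1)) = (θ + n • (ω : T1), ((fiberIter ω F n θ x : ℝ) : T1)) := by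
  induction n generalizing θ x with
  | zero => simp [fiberIter]
  | succ n ih =>
    rw [Function.iterate_succ_apply, hproj, ih]
    simp only [fiberIter]
    congr 1
    rw [succ_nsmul]; abel

/-- unnormalizing covering map -/
def Psi (p : ℕ) (k : ℤ) (z : ℝ × ℝ) : T1 × T1 := (((p * z.1 : ℝ) : T1), ((z.2 + k * z.1 : ℝ) : T1))

theorem Psi_open {p : ℕ} (hp : 1 ≤ p) (k : ℤ) : IsOpenMap (Psi p k) := by
  have hp0 : (p : ℝ) ≠ 0 := by positivity
  let h : ℝ × ℝ ≃ₜ ℝ × ℝ :=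
    { toFun := fun z => (p * z.1, z.2 + k * z.1)
      invFun := fun z => (z.1 / p, z.2 - k * (z.1 / p))
      left_inv := fun z => by ext <;> simp <;> field_simp <;> ring
      right_inv := fun z => by ext <;> simp <;> field_simp
      continuous_toFun := by fun_prop
      continuous_invFun := by fun_prop }
  have h1 : IsOpenMap (fun x : ℝ => (x : T1)) := QuotientAddGroup.isOpenMap_coe
  exact (h1.prodMap h1).comp h.isOpenMap

theorem annulus {ω : ℝ} {F : T1 → ℝ → ℝ}
    {f : T1 × T1 → T1 × T1}
    (hproj : ∀ (θ : T1) (x : ℝ), f (θ, (x : T1)) = (θ + (ω : T1), ((F θ x : ℝ) : T1)))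
    {Q p N : ℕ} {k T : ℤ} (hp : 1 ≤ p) (hcop : IsCoprime (p : ℤ) k)
    {lh uh : C(T1, ℝ)} (hlu : ∀ t, lh t < uh t)
    (hin : ∀ s X : ℝ, lh (s : T1) ≤ X → X ≤ uh (s : T1) →
        lh ((s + N * (Q * ω / p) : ℝ) : T1) < fiberIter ω F (Q * N) ((p * s : ℝ) : T1) (X + k * s)
          - N * T - k * (s + N * (Q * ω / p)) ∧
        fiberIter ω F (Q * N) ((p * s : ℝ) : T1) (X + k * s)
          - N * T - k * (s + N * (Q * ω / p)) < uh ((s + N * (Q * ω / p) : ℝ) : T1))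
    (hdis : ∀ (s : ℝ) (i j : ℤ), 0 < p * j - k * i →
        uh (s : T1) < lh ((s - i / p : ℝ) : T1) + (j - k * i / p)) :
    ∃ e : T1 × Set.Icc (0 : ℝ) 1 → T1 × T1,
      Continuous e ∧ Function.Injective e ∧
      f^[Q * N] '' Set.range e ⊆ interior (Set.range e) := by
  have hp0 : (0 : ℝ) < p := by positivity
  set X : T1 × Set.Icc (0 : ℝ) 1 → ℝ := fun z => lh z.1 + z.2 * (uh z.1 - lh z.1) with hX
  have hXc : Continuous X := by
    simp only [hX]; fun_prop
  have hX1 : ∀ z, lh z.1 ≤ X z := fun z => by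
    have := mul_nonneg z.2.2.1 (sub_nonneg.2 (hlu z.1).le)
    simp only [hX]; linarith
  have hX2 : ∀ z, X z ≤ uh z.1 := fun z => by
    have := mul_nonneg (sub_nonneg.2 z.2.2.2) (sub_nonneg.2 (hlu z.1).le)
    simp only [hX]; linarith
  set e : T1 × Set.Icc (0 : ℝ) 1 → T1 × T1 := fun z => (p • z.1, (X z : T1) + k • z.1) with he
  have heP : ∀ (a : ℝ) (s : Set.Icc (0 : ℝ) 1), e ((a : T1), s) = Psi p k (a, X ((a : T1), s)) := by
    intro a s
    simp only [he, Psi]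
    rw [← AddCircle.coe_nsmul, ← AddCircle.coe_zsmul, ← AddCircle.coe_add, nsmul_eq_mul,
      zsmul_eq_mul]
  refine ⟨e, ?_, ?_, ?_⟩
  · simp only [he]
    have h1 : Continuous fun z => ((X z : ℝ) : T1) := (AddCircle.continuous_mk' (1 : ℝ)).comp hXc
    fun_prop
  · rintro ⟨ta, s⟩ ⟨tb, s'⟩ hab
    obtain ⟨a, rfl⟩ : ∃ a : ℝ, (a : T1) = ta := QuotientAddGroup.mk_surjective ta
    obtain ⟨b, rfl⟩ : ∃ b : ℝ, (b : T1) = tb := QuotientAddGroup.mk_surjective tb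
    rw [heP, heP] at hab
    simp only [Psi, Prod.mk.injEq] at hab
    obtain ⟨h1, h2⟩ := hab
    obtain ⟨i, hi⟩ := coe_eq_iff'.1 h1
    obtain ⟨j, hj⟩ := coe_eq_iff'.1 h2
    have hb : b = a - i / p := by field_simp; linarith
    have ha : a = b - ((-i : ℤ) : ℝ) / p := by rw [hb]; push_cast; ring
    set x := X ((a : T1), s) with hx
    set x' := X ((b : T1), s') with hx'
    have hxx : x = x' + (j - k * i / p) := by
      rw [hb] at hj
      have : k * (a - i / p) = k * a - k * i / p := by ring
      linarith
    have b1 := hX1 ((a : T1), s)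
    have b2 := hX2 ((a : T1), s)
    have b3 := hX1 ((b : T1), s')
    have b4 := hX2 ((b : T1), s')
    rw [← hx] at b1 b2
    rw [← hx'] at b3 b4
    simp only at b1 b2 b3 b4
    rcases lt_trichotomy (p * j - k * i) 0 with hD | hD | hD
    · exfalso
      have := hdis b (-i) (-j) (by linarith)
      rw [← ha] at this
      push_cast at this
      have e1 : (k : ℝ) * -i / p = - (k * i / p) := by ring
      rw [e1] at this
      linarith
    · have hdvd : (p : ℤ) ∣ i := by
        refine hcop.dvd_of_dvd_mul_left ⟨j, by linarith⟩
      obtain ⟨q, rfl⟩ := hdvd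
      have hjq : j = k * q := by
        have hpz : (p : ℤ) ≠ 0 := by omega
        apply mul_left_cancel₀ hpz
        linarith
      have hba : b = a + ((-q : ℤ) : ℝ) := by rw [hb]; push_cast; field_simp; ring
      have hT : (b : T1) = (a : T1) := by rw [hba, coe_add_int]
      have hxe : x = x' := by
        rw [hxx, hjq]; push_cast; field_simp; ring
      rw [hx, hx', hT] at hxe
      simp only [hX] at hxe
      have hpos := sub_pos.2 (hlu (a : T1))
      have hs : (s : ℝ) = s' := by
        have : (s : ℝ) * (uh a - lh a) = s' * (uh a - lh a) := by linarith
        exact mul_right_cancel₀ hpos.ne' this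
      rw [hT, Subtype.ext hs]
    · exfalso
      have := hdis a i j hD
      rw [← hb] at this
      linarith
  · set U : Set (ℝ × ℝ) := {z | lh (z.1 : T1) < z.2 ∧ z.2 < uh (z.1 : T1)} with hU
    have hcoe : Continuous fun z : ℝ × ℝ => (z.1 : T1) :=
      (AddCircle.continuous_mk' (1 : ℝ)).comp continuous_fst
    have hUo : IsOpen U :=
      (isOpen_lt (lh.continuous.comp hcoe) continuous_snd).inter
        (isOpen_lt continuous_snd (uh.continuous.comp hcoe))
    have hsub : Psi p k '' U ⊆ interior (Set.range e) := by
      refine interior_maximal ?_ (Psi_open hp k U hUo)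
      rintro _ ⟨⟨a, x⟩, ⟨h1, h2⟩, rfl⟩
      simp only at h1 h2
      have hpos := sub_pos.2 (hlu (a : T1))
      refine ⟨((a : T1), ⟨(x - lh a) / (uh a - lh a), ?_, ?_⟩), ?_⟩
      · exact div_nonneg (by linarith) hpos.le
      · rw [div_le_one hpos]; linarith
      · rw [heP]
        congr 2
        simp only [hX]
        rw [div_mul_cancel₀ _ hpos.ne']; ring
    rintro _ ⟨_, ⟨⟨ta, s⟩, rfl⟩, rfl⟩
    obtain ⟨a, rfl⟩ : ∃ a : ℝ, (a : T1) = ta := QuotientAddGroup.mk_surjective ta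
    apply hsub
    obtain ⟨h1, h2⟩ := hin a (X ((a : T1), s)) (hX1 ((a : T1), s)) (hX2 ((a : T1), s))
    refine ⟨(a + N * (Q * ω / p), _), ⟨h1, h2⟩, ?_⟩
    rw [heP]
    simp only [Psi]
    rw [iter_proj hproj]
    refine Prod.ext ?_ ?_
    · simp only
      rw [← AddCircle.coe_nsmul, ← AddCircle.coe_add, nsmul_eq_mul]
      congr 1
      push_cast
      field_simp
    · simp only
      exact coe_eq_iff'.2 ⟨-(N * T), by push_cast; ring⟩


/-- Theorem B: if `f` is mode-locked then some iterate of `f` maps a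
closed annulus (a continuous injective image of `T¹ × [0,1]`), bounded by continuous
curves, into its own interior. -/
theorem mode_locking_annulus
    (ω : ℝ) (hω : Irrational ω)
    (F : T1 → ℝ → ℝ) (hF : IsQpfLift ω F)
    (f : T1 × T1 → T1 × T1) (hfc : Continuous f)
    (hproj : ∀ (θ : T1) (x : ℝ), f (θ, (x : T1)) = (θ + (ω : T1), ((F θ x : ℝ) : T1)))
    (ρ : ℝ) (hρ : HasRotNum ω F ρ)
    (hlock : ∃ ε : ℝ, 0 < ε ∧ HasRotNum ω (fun θ x => F θ x + ε) ρ ∧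
      HasRotNum ω (fun θ x => F θ x + (-ε)) ρ) :
    ∃ (N : ℕ), 1 ≤ N ∧ ∃ e : T1 × Set.Icc (0 : ℝ) 1 → T1 × T1,
      Continuous e ∧ Function.Injective e ∧
      f^[N] '' Set.range e ⊆ interior (Set.range e) := by
  obtain ⟨ε, hε, h1, h2⟩ := hlock
  obtain ⟨C, hC, hdev⟩ := bdd_dev hω hF hε h1 h2
  have he : 0 < ε / 2 := by positivity
  have hup : ∀ (n : ℕ) (θ : T1) (x : ℝ),
      fiberIter ω (shf F (2 * (ε / 2))) n θ x ≤ x + n * ρ + C := by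
    intro n θ x
    rw [mul_div_cancel₀ ε (two_ne_zero)]
    exact (hdev n θ x).1
  have hlow : ∀ (n : ℕ) (θ : T1) (x : ℝ),
      x + n * ρ - C ≤ fiberIter ω (shf F (-(ε / 2))) n θ x := fun n θ x =>
    (hdev n θ x).2.trans (fi_le hF (by linarith) n θ le_rfl)
  obtain ⟨Q, p, k, T, hQ, hp, hcop, hrel⟩ := rho_rel hω hF he hup hlow
  obtain ⟨N, hN, lh, uh, hlu, hin, hdis⟩ := normalized hω hF he hC hup hlow hQ hp hrel
  exact ⟨Q * N, Nat.mul_pos hQ hN, annulus hproj hp hcop hlu hin hdis⟩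
end
end

section
/- Let f be a quasiperiodically forced circle homeomorphism over an irrational ω with lift F whose fibered rotation number is ρ₀. Suppose there exist an f-invariant ergodic Borel probability measure μ on T¹×T¹ and a family (μ_θ)_{θ∈T¹} of atomless Borel probability measures on T¹ such that θ ↦ μ_θ(B) is measurable for every Borel set B ⊆ T¹, μ(A) = ∫_{T¹} μ_θ(A_θ) dθ for every Borel set A ⊆ T¹×T¹ (where A_θ := {x ∈ T¹ : (θ,x) ∈ A} and dθ is the Haar probability measure on T¹), and (f_θ)_* μ_θ = μ_{θ+ω} for every θ. Then for every ε > 0, if ρ₊ is the fibered rotation number of F_ε and ρ₋ that of F_{−ε}, one has ρ₋ < ρ₀ < ρ₊. -/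
open Filter Topology MeasureTheory
open scoped ENNReal

noncomputable section

/-- The representative in `[0,1)`. -/
def rep (ξ : T1) : ℝ := (AddCircle.equivIco (1:ℝ) 0 ξ : ℝ)

lemma rep_coe (ξ : T1) : ((rep ξ : ℝ) : T1) = ξ := AddCircle.coe_equivIco
lemma rep_nonneg (ξ : T1) : 0 ≤ rep ξ := (AddCircle.equivIco (1:ℝ) 0 ξ).2.1
lemma rep_lt (ξ : T1) : rep ξ < 1 := by
  have := (AddCircle.equivIco (1:ℝ) 0 ξ).2.2
  simpa [rep] using this
lemma rep_meas : Measurable rep :=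
  measurable_subtype_coe.comp (AddCircle.measurableEquivIco (1:ℝ) 0).measurable

lemma rep_coe_real (x : ℝ) : ∃ n : ℤ, rep (x : T1) = x + n := by
  have h : ((rep (x : T1) - x : ℝ) : T1) = 0 := by
    rw [AddCircle.coe_sub, rep_coe, sub_self]
  rw [AddCircle.coe_eq_zero_iff] at h
  obtain ⟨n, hn⟩ := h
  refine ⟨n, ?_⟩
  simp at hn
  linarith

/-- The lifted distribution function (up to a constant). -/
def dist1 (m : Measure T1) (x : ℝ) : ℝ := ∫ ξ, (⌊x - rep ξ⌋ : ℝ) ∂m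

lemma floor_meas (x : ℝ) : Measurable fun ξ : T1 => (⌊x - rep ξ⌋ : ℝ) :=
  (measurable_from_top (f := fun n : ℤ => (n : ℝ))).comp
    (Int.measurable_floor.comp (measurable_const.sub rep_meas))

lemma floor_lb (x : ℝ) (ξ : T1) : x - 2 ≤ (⌊x - rep ξ⌋ : ℝ) := by
  have := Int.sub_one_lt_floor (x - rep ξ)
  have := rep_lt ξ
  linarith

lemma floor_ub (x : ℝ) (ξ : T1) : (⌊x - rep ξ⌋ : ℝ) ≤ x := by
  have := Int.floor_le (x - rep ξ)
  have := rep_nonneg ξ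
  linarith

lemma floor_int (m : Measure T1) [IsProbabilityMeasure m] (x : ℝ) :
    Integrable (fun ξ : T1 => (⌊x - rep ξ⌋ : ℝ)) m := by
  refine Integrable.of_bound (floor_meas x).aestronglyMeasurable (|x| + 2) ?_
  refine Eventually.of_forall fun ξ => ?_
  have h1 := floor_lb x ξ
  have h2 := floor_ub x ξ
  rw [Real.norm_eq_abs, abs_le]
  have := abs_le.1 (le_refl |x|)
  constructor <;> linarith

lemma dist1_lb (m : Measure T1) [IsProbabilityMeasure m] (x : ℝ) : x - 2 ≤ dist1 m x := by
  have := integral_mono (μ := m) (integrable_const (x - 2)) (floor_int m x)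
    (fun ξ => floor_lb x ξ)
  simpa [dist1] using this

lemma dist1_ub (m : Measure T1) [IsProbabilityMeasure m] (x : ℝ) : dist1 m x ≤ x := by
  have := integral_mono (μ := m) (floor_int m x) (integrable_const x)
    (fun ξ => floor_ub x ξ)
  simpa [dist1] using this

lemma dist1_mono (m : Measure T1) [IsProbabilityMeasure m] : Monotone (dist1 m) := by
  intro x y hxy
  refine integral_mono (floor_int m x) (floor_int m y) fun ξ => ?_
  have : ⌊x - rep ξ⌋ ≤ ⌊y - rep ξ⌋ := Int.floor_le_floor (by linarith)
  exact Int.cast_le.2 this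

lemma dist1_add_int (m : Measure T1) [IsProbabilityMeasure m] (x : ℝ) (n : ℤ) :
    dist1 m (x + n) = dist1 m x + n := by
  have : ∀ ξ, (⌊x + n - rep ξ⌋ : ℝ) = (⌊x - rep ξ⌋ : ℝ) + n := by
    intro ξ
    rw [show x + n - rep ξ = (x - rep ξ) + n by ring, Int.floor_add_intCast]
    push_cast; ring
  unfold dist1
  simp_rw [this]
  rw [integral_add (floor_int m x) (integrable_const _)]
  simp

lemma dist1_cont (m : Measure T1) [IsProbabilityMeasure m] (hm : ∀ ξ, m {ξ} = 0) :
    Continuous (dist1 m) := by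
  rw [continuous_iff_continuousAt]
  intro x
  refine tendsto_integral_filter_of_dominated_convergence (fun _ => |x| + 3) ?_ ?_
    (integrable_const _) ?_
  · exact Eventually.of_forall fun y => (floor_meas y).aestronglyMeasurable
  · filter_upwards [Metric.ball_mem_nhds x one_pos] with y hy
    refine Eventually.of_forall fun ξ => ?_
    have h1 := floor_lb y ξ
    have h2 := floor_ub y ξ
    rw [Metric.mem_ball, Real.dist_eq, abs_lt] at hy
    rw [Real.norm_eq_abs, abs_le]
    have := abs_le.1 (le_refl |x|)
    constructor <;> linarith
  · have : ∀ᵐ ξ ∂m, ξ ≠ (x : T1) := by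
      rw [ae_iff]; simpa using hm x
    filter_upwards [this] with ξ hξ
    have hne : x - rep ξ ≠ (⌊x - rep ξ⌋ : ℝ) := by
      intro h
      apply hξ
      have h2 : x = rep ξ + (⌊x - rep ξ⌋ : ℝ) := by linarith
      rw [h2, AddCircle.coe_add, rep_coe]
      have : (((⌊x - rep ξ⌋ : ℤ) : ℝ) : T1) = 0 := by
        rw [AddCircle.coe_eq_zero_iff]; exact ⟨⌊x - rep ξ⌋, by simp⟩
      rw [this, add_zero]
    have hlt : (⌊x - rep ξ⌋ : ℝ) < x - rep ξ := lt_of_le_of_ne (Int.floor_le _) (Ne.symm hne)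
    have hlt2 := Int.lt_floor_add_one (x - rep ξ)
    have : ∀ᶠ y in 𝓝 x, (⌊y - rep ξ⌋ : ℝ) = (⌊x - rep ξ⌋ : ℝ) := by
      have hc : ContinuousAt (fun y : ℝ => y - rep ξ) x := by fun_prop
      filter_upwards [hc.eventually_const_lt hlt, hc.eventually_lt_const hlt2] with y h1 h2
      norm_cast
      rw [Int.floor_eq_iff]
      exact ⟨h1.le, h2⟩
    exact (tendsto_congr' this).2 tendsto_const_nhds

lemma dist1_arc (m : Measure T1) [IsProbabilityMeasure m] (x y : ℝ) (hxy : x ≤ y)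
    (hy : y ≤ x + 1) (S : Set T1) (hS : ∀ z : ℝ, x ≤ z → z ≤ y → (z : T1) ∈ S) :
    ENNReal.ofReal (dist1 m y - dist1 m x) ≤ m S := by
  have hS' := subset_toMeasurable m S
  rw [← measure_toMeasurable S]
  set T := toMeasurable m S
  have hT : MeasurableSet T := measurableSet_toMeasurable m S
  rw [← ofReal_measureReal (h := measure_ne_top m T)]
  apply ENNReal.ofReal_le_ofReal
  rw [← integral_indicator_one hT]
  unfold dist1
  rw [← integral_sub (floor_int m y) (floor_int m x)]
  refine integral_mono ((floor_int m y).sub (floor_int m x))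
    ((integrable_const (1:ℝ)).indicator hT) fun ξ => ?_
  have h1 : ⌊y - rep ξ⌋ ≤ ⌊x - rep ξ⌋ + 1 := by
    rw [← Int.floor_add_one]
    exact Int.floor_le_floor (by linarith)
  have h0 : ⌊x - rep ξ⌋ ≤ ⌊y - rep ξ⌋ := Int.floor_le_floor (by linarith)
  by_cases hξ : ξ ∈ T
  · simp only [Set.indicator_of_mem hξ]
    have : (⌊y - rep ξ⌋ : ℝ) ≤ (⌊x - rep ξ⌋ : ℝ) + 1 := by exact_mod_cast h1
    simp; linarith
  · simp only [Set.indicator_of_notMem hξ]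
    by_contra hcon
    apply hξ
    apply hS'
    have hlt : ⌊x - rep ξ⌋ < ⌊y - rep ξ⌋ := by
      rcases h0.lt_or_eq with h | h
      · exact h
      · exfalso; apply hcon; simp [h]
    have e : ((rep ξ + (⌊y - rep ξ⌋ : ℤ) : ℝ) : T1) = ξ := by
      rw [AddCircle.coe_add, rep_coe]
      have : (((⌊y - rep ξ⌋ : ℤ) : ℝ) : T1) = 0 := by
        rw [AddCircle.coe_eq_zero_iff]; exact ⟨⌊y - rep ξ⌋, by simp⟩
      rw [this, add_zero]
    rw [← e]
    apply hS
    · have := Int.floor_lt.1 hlt; linarith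
    · have := Int.floor_le (y - rep ξ); linarith

lemma dist1_level (m : Measure T1) [IsProbabilityMeasure m] (hm : ∀ ξ, m {ξ} = 0)
    (a t : ℝ) (ht : 0 < t) (ht2 : t < 1 / 2) (S : Set T1)
    (hS : ∀ z : ℝ, |dist1 m z - a| ≤ t → (z : T1) ∈ S) :
    ENNReal.ofReal (2 * t) ≤ m S := by
  have hsurj : Function.Surjective (dist1 m) := by
    refine (dist1_cont m hm).surjective ?_ ?_
    · refine tendsto_atTop_mono (dist1_lb m) ?_
      exact tendsto_atTop_add_const_right _ (-2) tendsto_id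
    · exact tendsto_atBot_mono (dist1_ub m) tendsto_id
  obtain ⟨x, hx⟩ := hsurj (a - t)
  obtain ⟨y, hy⟩ := hsurj (a + t)
  have hmono := dist1_mono m
  have hxy : x ≤ y := by
    by_contra h
    have := hmono (not_le.1 h).le
    linarith
  have hyx : y ≤ x + 1 := by
    by_contra h
    have h1 := hmono (not_le.1 h).le
    have := dist1_add_int m x 1
    simp at this
    linarith
  have := dist1_arc m x y hxy hyx S (fun z hz1 hz2 => hS z (by
    have h1 := hmono hz1
    have h2 := hmono hz2
    rw [abs_le]; constructor <;> linarith))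
  rwa [hy, hx, show a + t - (a - t) = 2 * t by ring] at this

lemma equi_aux (ω : ℝ) (F : T1 → ℝ → ℝ) (hF : IsQpfLift ω F)
    (f : T1 × T1 → T1 × T1) (hfc : Continuous f)
    (hproj : ∀ (θ : T1) (x : ℝ), f (θ, (x : T1)) = (θ + (ω : T1), ((F θ x : ℝ) : T1)))
    (μθ : T1 → Measure T1) (hθprob : ∀ θ, IsProbabilityMeasure (μθ θ))
    (hpush : ∀ θ : T1, (μθ θ).map (fun x => (f (θ, x)).2) = μθ (θ + (ω : T1)))
    (θ : T1) (x y : ℝ) :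
    dist1 (μθ (θ + ω)) (F θ x) - dist1 (μθ (θ + ω)) (F θ y)
      = dist1 (μθ θ) x - dist1 (μθ θ) y := by
  have hperN : ∀ (n : ℕ) (u : ℝ), F θ (u + n) = F θ u + n := by
    intro n
    induction n with
    | zero => intro u; simp
    | succ k ih => intro u; push_cast; rw [← add_assoc, hF.per, ih]; ring
  have hperZ : ∀ (n : ℤ) (u : ℝ), F θ (u + n) = F θ u + n := by
    intro n u
    obtain ⟨k, rfl | rfl⟩ := n.eq_nat_or_neg
    · simpa using hperN k u
    · have := hperN k (u + ((-(k:ℤ) : ℤ) : ℝ))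
      push_cast at this ⊢
      rw [neg_add_cancel_right] at this
      linarith
  have hfl : ∀ u z : ℝ, ⌊F θ z - F θ u⌋ = ⌊z - u⌋ := by
    intro u z
    refine eq_of_forall_le_iff fun n => ?_
    rw [Int.le_floor, Int.le_floor, le_sub_iff_add_le', le_sub_iff_add_le', ← hperZ,
      (hF.mono θ).le_iff_le]
  have hg : Measurable (fun ξ : T1 => (f (θ, ξ)).2) := by
    have : Continuous (fun ξ : T1 => (f (θ, ξ)).2) := by fun_prop
    exact this.measurable
  have key : ∀ z : ℝ, dist1 (μθ (θ + ω)) (F θ z)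
      = ∫ ξ, (⌊F θ z - rep (f (θ, ξ)).2⌋ : ℝ) ∂(μθ θ) := by
    intro z
    unfold dist1
    rw [← hpush θ, integral_map hg.aemeasurable (floor_meas _).aestronglyMeasurable]
  have kint : ∀ z : ℝ, Integrable (fun ξ => (⌊F θ z - rep (f (θ, ξ)).2⌋ : ℝ)) (μθ θ) := by
    intro z
    have h := floor_int (μθ (θ + ω)) (F θ z)
    rw [← hpush θ] at h
    exact h.comp_measurable hg
  rw [key, key, ← integral_sub (kint x) (kint y)]
  unfold dist1
  rw [← integral_sub (floor_int _ x) (floor_int _ y)]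
  refine integral_congr_ae (Eventually.of_forall fun ξ => ?_)
  have h1 : (f (θ, ξ)).2 = ((F θ (rep ξ) : ℝ) : T1) := by
    conv_lhs => rw [← rep_coe ξ]
    rw [hproj]
  obtain ⟨n, hn⟩ := rep_coe_real (F θ (rep ξ))
  have h2 : ∀ z : ℝ, (⌊F θ z - rep (f (θ, ξ)).2⌋ : ℝ) = (⌊z - rep ξ⌋ : ℝ) - n := by
    intro z
    rw [h1, hn, ← sub_sub, Int.floor_sub_intCast, hfl]
    push_cast; ring
  simp only [h2]
  ring

lemma dist1_meas (μθ : T1 → Measure T1) (hθprob : ∀ θ, IsProbabilityMeasure (μθ θ))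
    (hmeas : ∀ B : Set T1, MeasurableSet B → Measurable fun θ => μθ θ B) :
    Measurable (fun p : T1 × ℝ => dist1 (μθ p.1) p.2) := by
  let κ : ProbabilityTheory.Kernel T1 T1 := ⟨μθ, Measure.measurable_of_measurable_coe _ hmeas⟩
  have : ProbabilityTheory.IsMarkovKernel κ := ⟨hθprob⟩
  have h : StronglyMeasurable (fun q : (T1 × ℝ) × T1 => (⌊q.1.2 - rep q.2⌋ : ℝ)) := by
    apply Measurable.stronglyMeasurable
    exact (measurable_from_top (f := fun n : ℤ => (n : ℝ))).comp
      (Int.measurable_floor.comp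
        ((measurable_snd.comp measurable_fst).sub (rep_meas.comp measurable_snd)))
  exact (h.integral_kernel_prod_right' (κ := κ.comap Prod.fst measurable_fst)).measurable

/-- Accumulated gain along the perturbed orbit. -/
def gain (ω : ℝ) (F H : T1 → ℝ → ℝ) (e : ℝ) : ℕ → T1 → ℝ → ℝ
  | 0, _, _ => 0
  | n + 1, θ, x => |H (θ + (ω : T1)) (F θ x + e) - H (θ + (ω : T1)) (F θ x)|
      + gain ω F H e n (θ + (ω : T1)) (F θ x + e)

section sys
variable {ω : ℝ} {F H : T1 → ℝ → ℝ} {e : ℝ}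

lemma gain_nonneg (n : ℕ) : ∀ θ x, 0 ≤ gain ω F H e n θ x := by
  induction n with
  | zero => intro θ x; simp [gain]
  | succ n ih => intro θ x; have := ih (θ + ω) (F θ x + e); simp only [gain]; positivity

lemma gain_mono_succ (n : ℕ) : ∀ θ x, gain ω F H e n θ x ≤ gain ω F H e (n + 1) θ x := by
  induction n with
  | zero => intro θ x; exact gain_nonneg 1 θ x
  | succ n ih =>
    intro θ x
    have := ih (θ + ω) (F θ x + e)
    rw [gain, gain]
    linarith

lemma gain_cont (hFc : ∀ θ, Continuous (F θ)) (hH : ∀ θ, Continuous (H θ)) (n : ℕ) :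
    ∀ θ, Continuous (gain ω F H e n θ) := by
  induction n with
  | zero => intro θ; exact continuous_const
  | succ n ih =>
    intro θ
    have h1 := hFc θ
    have h2 := hH (θ + ω)
    have h3 := ih (θ + ω)
    change Continuous (fun x => |H (θ + (ω : T1)) (F θ x + e) - H (θ + (ω : T1)) (F θ x)|
      + gain ω F H e n (θ + (ω : T1)) (F θ x + e))
    fun_prop

lemma gain_meas (hFm : Measurable fun p : T1 × ℝ => F p.1 p.2)
    (hH : Measurable fun p : T1 × ℝ => H p.1 p.2) (n : ℕ) :
    Measurable fun p : T1 × ℝ => gain ω F H e n p.1 p.2 := by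
  induction n with
  | zero => exact measurable_const
  | succ n ih =>
    have hs : Measurable fun p : T1 × ℝ => p.1 + (ω : T1) := measurable_fst.add_const _
    have h1 := hH.comp (hs.prodMk (hFm.add_const e))
    have h2 := hH.comp (hs.prodMk hFm)
    have h3 := ih.comp (hs.prodMk (hFm.add_const e))
    exact ((continuous_abs.measurable.comp (h1.sub h2))).add h3

lemma gain_per (hper : ∀ θ (n : ℤ) x, F θ (x + n) = F θ x + n)
    (hH : ∀ θ x (n : ℤ), H θ (x + n) = H θ x + n) (n : ℕ) :
    ∀ θ x (k : ℤ), gain ω F H e n θ (x + k) = gain ω F H e n θ x := by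
  induction n with
  | zero => intro θ x k; rfl
  | succ n ih =>
    intro θ x k
    simp only [gain]
    rw [hper, show F θ x + k + e = F θ x + e + k by ring, ih, hH, hH]
    congr 2
    ring

lemma gain_le {C : ℝ} (hC : ∀ θ x, |H θ (x + e) - H θ x| ≤ C) (n : ℕ) :
    ∀ θ x, gain ω F H e n θ x ≤ n * C := by
  induction n with
  | zero => intro θ x; simp [gain]
  | succ n ih =>
    intro θ x
    have := ih (θ + ω) (F θ x + e)
    have := hC (θ + ω) (F θ x)
    simp only [gain]
    push_cast
    linarith

lemma iter_equi (hequi : ∀ θ x y, H (θ + (ω : T1)) (F θ x) - H (θ + (ω : T1)) (F θ y)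
      = H θ x - H θ y) (n : ℕ) : ∀ (θ : T1) x y,
    H (θ + n • (ω : T1)) (fiberIter ω F n θ x) - H (θ + n • (ω : T1)) (fiberIter ω F n θ y)
      = H θ x - H θ y := by
  induction n with
  | zero => intro θ x y; simp [fiberIter]
  | succ n ih =>
    intro θ x y
    rw [succ_nsmul', ← add_assoc]
    simp only [fiberIter]
    rw [ih, hequi]

lemma gain_eq (hequi : ∀ θ x y, H (θ + (ω : T1)) (F θ x) - H (θ + (ω : T1)) (F θ y)
      = H θ x - H θ y) (s : ℝ)
    (hs : ∀ θ x, s * |H θ (x + e) - H θ x| = H θ (x + e) - H θ x) (n : ℕ) : ∀ (θ : T1) x,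
    s * gain ω F H e n θ x =
     H (θ + n • (ω : T1)) (fiberIter ω (fun θ x => F θ x + e) n θ x)
      - H (θ + n • (ω : T1)) (fiberIter ω F n θ x) := by
  induction n with
  | zero => intro θ x; simp [fiberIter, gain]
  | succ n ih =>
    intro θ x
    have h1 := iter_equi hequi n (θ + ω) (F θ x + e) (F θ x)
    rw [succ_nsmul', ← add_assoc]
    simp only [fiberIter, gain]
    rw [mul_add, hs, ih]
    linarith

lemma gain_add (m n : ℕ) : ∀ (θ : T1) x, ∃ x',
    gain ω F H e (m + n) θ x = gain ω F H e m θ x + gain ω F H e n (θ + m • (ω : T1)) x' := by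
  induction m with
  | zero => intro θ x; exact ⟨x, by simp [gain]⟩
  | succ m ih =>
    intro θ x
    obtain ⟨x', hx'⟩ := ih (θ + ω) (F θ x + e)
    refine ⟨x', ?_⟩
    rw [show m + 1 + n = (m + n) + 1 by ring, succ_nsmul', ← add_assoc]
    simp only [gain]
    rw [hx']
    ring

lemma gain_block (m : ℕ) (δ : ℝ) (B : Set T1)
    (hB : ∀ θ ∈ B, ∀ x, δ ≤ gain ω F H e m θ x) (n : ℕ) : ∀ (θ : T1) x,
    ∑ j ∈ Finset.range n, B.indicator (fun _ => δ) (θ + (j * m) • (ω : T1))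
      ≤ gain ω F H e (n * m) θ x := by
  induction n with
  | zero => intro θ x; simp [gain]
  | succ n ih =>
    intro θ x
    rw [Finset.sum_range_succ', show (n + 1) * m = m + n * m by ring]
    obtain ⟨x', hx'⟩ := gain_add (ω := ω) (F := F) (H := H) (e := e) m (n * m) θ x
    rw [hx']
    have h1 := ih (θ + m • (ω : T1)) x'
    have h2 : B.indicator (fun _ => δ) (θ + (0 * m) • (ω : T1)) ≤ gain ω F H e m θ x := by
      rw [zero_mul, zero_smul, add_zero]
      by_cases h : θ ∈ B
      · rw [Set.indicator_of_mem h]; exact hB θ h x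
      · rw [Set.indicator_of_notMem h]; exact gain_nonneg m θ x
    have h3 : ∀ j : ℕ, θ + ((j + 1) * m) • (ω : T1) = θ + m • (ω : T1) + (j * m) • (ω : T1) := by
      intro j; rw [add_assoc, ← add_smul]; congr 2; ring
    simp only [h3]
    linarith

/-- If the mean gain vanishes then a.e. fibre has points with small gain. -/
lemma gain_small (hFc : ∀ θ, Continuous (F θ)) (hHc : ∀ θ, Continuous (H θ))
    (hFm : Measurable fun p : T1 × ℝ => F p.1 p.2)
    (hHm : Measurable fun p : T1 × ℝ => H p.1 p.2)
    {C : ℝ} (hC : ∀ θ x, |H θ (x + e) - H θ x| ≤ C)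
    (hlim : ∀ θ : T1, Tendsto (fun n : ℕ => gain ω F H e n θ 0 / n) atTop (𝓝 0))
    (m : ℕ) (δ : ℝ) (hδ : 0 < δ) :
    ∀ᵐ θ : T1, ∃ q : ℚ, gain ω F H e m θ q < δ := by
  rcases Nat.eq_zero_or_pos m with rfl | hm
  · exact Eventually.of_forall fun θ => ⟨0, by simpa [gain] using hδ⟩
  set B : Set T1 := {θ | ∀ q : ℚ, δ ≤ gain ω F H e m θ q} with hBdef
  have hgm : ∀ k (x : ℝ), Measurable fun θ : T1 => gain ω F H e k θ x := fun k x =>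
    (gain_meas hFm hHm k).comp (measurable_id.prodMk measurable_const)
  have hBm : MeasurableSet B := by
    rw [hBdef, Set.ofPred_forall]
    exact MeasurableSet.iInter fun q => measurableSet_le measurable_const (hgm m q)
  have hB : ∀ θ ∈ B, ∀ x, δ ≤ gain ω F H e m θ x := by
    intro θ hθ x
    have hcl : IsClosed {x : ℝ | δ ≤ gain ω F H e m θ x} :=
      isClosed_le continuous_const (gain_cont hFc hHc m θ)
    have hd := Rat.isDenseEmbedding_coe_real.dense
    exact isClosed_property hd hcl hθ x
  suffices hB0 : volume B = 0 by
    rw [ae_iff]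
    simpa [hBdef] using hB0
  have hCn : 0 ≤ C := (abs_nonneg _).trans (hC 0 0)
  have hbd : ∀ (n : ℕ) (θ : T1), ‖gain ω F H e n θ 0 / n‖ ≤ C := by
    intro n θ
    have h0 := gain_nonneg (ω := ω) (F := F) (H := H) (e := e) n θ 0
    rw [Real.norm_of_nonneg (by positivity)]
    rcases Nat.eq_zero_or_pos n with rfl | hn
    · simpa using hCn
    · rw [div_le_iff₀ (by exact_mod_cast hn), mul_comm]
      exact gain_le hC n θ 0
  have hint : ∀ n : ℕ, Integrable (fun θ : T1 => gain ω F H e n θ 0 / n) := fun n =>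
    Integrable.of_bound ((hgm n 0).div_const _).aestronglyMeasurable C
      (Eventually.of_forall (hbd n))
  have hT : Tendsto (fun n : ℕ => ∫ θ : T1, gain ω F H e n θ 0 / n) atTop (𝓝 0) := by
    have := tendsto_integral_of_dominated_convergence (μ := (volume : Measure T1))
      (F := fun (n : ℕ) (θ : T1) => gain ω F H e n θ 0 / n) (f := fun _ => 0) (fun _ => C)
      (fun n => ((hgm n 0).div_const _).aestronglyMeasurable) (integrable_const _)
      (fun n => Eventually.of_forall (hbd n)) (Eventually.of_forall hlim)
    simpa using this
  have hT2 : Tendsto (fun n : ℕ => (m : ℝ) * ∫ θ : T1, gain ω F H e (n * m) θ 0 / ((n * m : ℕ) : ℝ))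
      atTop (𝓝 0) := by
    have h1 : Tendsto (fun n : ℕ => n * m) atTop atTop :=
      tendsto_id.atTop_mul_const' hm
    have := (hT.comp h1).const_mul (m : ℝ)
    simpa using this
  have hle : ∀ᶠ n : ℕ in atTop, (volume : Measure T1).real B * δ ≤
      (m : ℝ) * ∫ θ : T1, gain ω F H e (n * m) θ 0 / ((n * m : ℕ) : ℝ) := by
    filter_upwards [eventually_gt_atTop 0] with n hn
    have hind : Integrable (B.indicator (fun _ => δ)) (volume : Measure T1) :=
      (integrable_const δ).indicator hBm
    have hnm : (0:ℝ) < ((n * m : ℕ) : ℝ) := by exact_mod_cast Nat.mul_pos hn hm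
    have hI : Integrable (fun θ : T1 => gain ω F H e (n * m) θ 0) := by
      have := (hint (n * m)).mul_const ((n * m : ℕ) : ℝ)
      refine this.congr (Eventually.of_forall fun θ => ?_)
      exact div_mul_cancel₀ _ hnm.ne'
    have h1 : ∫ θ : T1, ∑ j ∈ Finset.range n, B.indicator (fun _ => δ) (θ + (j * m) • (ω : T1))
        ≤ ∫ θ : T1, gain ω F H e (n * m) θ 0 :=
      integral_mono (integrable_finsetSum _ fun j _ => hind.comp_add_right _) hI
        (fun θ => gain_block m δ B hB n θ 0)
    rw [integral_finsetSum _ fun j _ => hind.comp_add_right _] at h1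
    have h2 : ∀ j, ∫ θ : T1, B.indicator (fun _ => δ) (θ + (j * m) • (ω : T1))
        = (volume : Measure T1).real B * δ := by
      intro j
      rw [integral_add_right_eq_self (fun θ : T1 => B.indicator (fun _ => δ) θ),
        integral_indicator_const _ hBm, smul_eq_mul]
    simp only [h2, Finset.sum_const, Finset.card_range, nsmul_eq_mul] at h1
    rw [integral_div, mul_div_assoc', le_div_iff₀ hnm]
    push_cast
    have hm' : (0:ℝ) < m := by exact_mod_cast hm
    nlinarith
  have := ge_of_tendsto hT2 hle
  have h0 : (volume : Measure T1).real B = 0 := by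
    have := measureReal_nonneg (μ := (volume : Measure T1)) (s := B)
    nlinarith
  rwa [measureReal_eq_zero_iff] at h0

end sys

/-- The core statement, for both signs `s = 1` and `s = -1`. -/
lemma core (ω : ℝ) (F : T1 → ℝ → ℝ) (hF : IsQpfLift ω F)
    (f : T1 × T1 → T1 × T1) (hfc : Continuous f)
    (hproj : ∀ (θ : T1) (x : ℝ), f (θ, (x : T1)) = (θ + (ω : T1), ((F θ x : ℝ) : T1)))
    (ρ₀ : ℝ) (hρ : HasRotNum ω F ρ₀)
    (μ : Measure (T1 × T1)) (hprob : IsProbabilityMeasure μ) (herg : Ergodic f μ)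
    (μθ : T1 → Measure T1)
    (hθprob : ∀ θ, IsProbabilityMeasure (μθ θ))
    (hatomless : ∀ (θ : T1) (x : T1), μθ θ {x} = 0)
    (hmeas : ∀ B : Set T1, MeasurableSet B → Measurable fun θ => μθ θ B)
    (hdisint : ∀ A : Set (T1 × T1), MeasurableSet A →
      μ A = ∫⁻ θ, μθ θ {x : T1 | (θ, x) ∈ A})
    (hpush : ∀ θ : T1, (μθ θ).map (fun x => (f (θ, x)).2) = μθ (θ + (ω : T1)))
    (ε : ℝ) (hε : 0 < ε) (s : ℝ) (hs : s = 1 ∨ s = -1)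
    (ρp : ℝ) (hρp : HasRotNum ω (fun θ x => F θ x + s * ε) ρp) :
    0 < s * (ρp - ρ₀) := by
  have hss : s * s = 1 := by rcases hs with rfl | rfl <;> norm_num
  set H : T1 → ℝ → ℝ := fun θ x => dist1 (μθ θ) x with hHdef
  have hequi : ∀ θ x y, H (θ + (ω : T1)) (F θ x) - H (θ + (ω : T1)) (F θ y) = H θ x - H θ y :=
    equi_aux ω F hF f hfc hproj μθ hθprob hpush
  have hHmono : ∀ θ, Monotone (H θ) := fun θ => dist1_mono (μθ θ)
  have hHc : ∀ θ, Continuous (H θ) := fun θ => dist1_cont (μθ θ) (hatomless θ)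
  have hHlb : ∀ θ x, x - 2 ≤ H θ x := fun θ => dist1_lb (μθ θ)
  have hHub : ∀ θ x, H θ x ≤ x := fun θ => dist1_ub (μθ θ)
  have hHper : ∀ θ x (n : ℤ), H θ (x + n) = H θ x + n := fun θ => dist1_add_int (μθ θ)
  have hHm : Measurable fun p : T1 × ℝ => H p.1 p.2 := dist1_meas μθ hθprob hmeas
  have hFm : Measurable fun p : T1 × ℝ => F p.1 p.2 := hF.cont.measurable
  have hFc : ∀ θ, Continuous (F θ) := fun θ =>
    hF.cont.comp (continuous_const.prodMk continuous_id)
  have hperN : ∀ θ (n : ℕ) (u : ℝ), F θ (u + n) = F θ u + n := by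
    intro θ n
    induction n with
    | zero => intro u; simp
    | succ k ih => intro u; push_cast; rw [← add_assoc, hF.per, ih]; ring
  have hper : ∀ θ (n : ℤ) (u : ℝ), F θ (u + n) = F θ u + n := by
    intro θ n u
    obtain ⟨k, rfl | rfl⟩ := n.eq_nat_or_neg
    · simpa using hperN θ k u
    · have := hperN θ k (u + ((-(k:ℤ) : ℤ) : ℝ))
      push_cast at this ⊢
      rw [neg_add_cancel_right] at this
      linarith
  have hsign : ∀ θ x, s * |H θ (x + s * ε) - H θ x| = H θ (x + s * ε) - H θ x := by
    intro θ x
    rcases hs with rfl | rfl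
    · have := hHmono θ (show x ≤ x + 1 * ε by linarith)
      rw [abs_of_nonneg (by linarith)]; ring
    · have := hHmono θ (show x + -1 * ε ≤ x by linarith)
      rw [abs_of_nonpos (by linarith)]; ring
  have hsabs : |s * ε| = ε := by
    rcases hs with rfl | rfl <;> simp [abs_of_pos hε]
  have hC : ∀ θ x, |H θ (x + s * ε) - H θ x| ≤ ε + 2 := by
    intro θ x
    have h1 := hHlb θ x
    have h2 := hHub θ x
    have h3 := hHlb θ (x + s * ε)
    have h4 := hHub θ (x + s * ε)
    have h5 := abs_le.1 hsabs.le
    rw [abs_le]; constructor <;> linarith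
  set G := gain ω F H (s * ε) with hG
  have hlim : ∀ θ : T1, Tendsto (fun n : ℕ => G n θ 0 / n) atTop (𝓝 (s * (ρp - ρ₀))) := by
    intro θ
    have h1 := ((hρp θ 0).sub (hρ θ 0)).const_mul s
    have h2 : Tendsto (fun n : ℕ => (2:ℝ) / n) atTop (𝓝 0) :=
      tendsto_const_div_atTop_nhds_zero_nat 2
    have h3 : Tendsto (fun n : ℕ => G n θ 0 / n -
        s * ((fiberIter ω (fun θ x => F θ x + s * ε) n θ 0 - 0) / n
          - (fiberIter ω F n θ 0 - 0) / n)) atTop (𝓝 0) := by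
      refine squeeze_zero_norm (fun n => ?_) h2
      have h := gain_eq hequi s hsign n θ 0
      rw [← hG] at h
      have h' : G n θ 0 = s * (H (θ + n • (ω : T1)) (fiberIter ω (fun θ x => F θ x + s * ε) n θ 0)
          - H (θ + n • (ω : T1)) (fiberIter ω F n θ 0)) := by
        rw [← h, ← mul_assoc, hss, one_mul]
      rw [h']
      set a := fiberIter ω (fun θ x => F θ x + s * ε) n θ 0
      set b := fiberIter ω F n θ 0
      set θ' := θ + n • (ω : T1)
      have e1 : s * (H θ' a - H θ' b) / n - s * ((a - 0) / n - (b - 0) / n)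
          = s * ((H θ' a - a) - (H θ' b - b)) / n := by ring
      have hs1 : |s| = 1 := by rcases hs with rfl | rfl <;> simp
      rw [e1, Real.norm_eq_abs, abs_div, abs_mul, hs1, one_mul, Nat.abs_cast]
      gcongr
      have h1 := hHlb θ' a
      have h2 := hHub θ' a
      have h3 := hHlb θ' b
      have h4 := hHub θ' b
      rw [abs_le]; constructor <;> linarith
    have := h3.add h1
    simpa using this
  have hge : 0 ≤ s * (ρp - ρ₀) :=
    ge_of_tendsto' (hlim 0) fun n => div_nonneg (gain_nonneg n 0 0) (Nat.cast_nonneg n)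
  refine lt_of_le_of_ne hge fun h0 => ?_
  rw [← h0] at hlim
  have hsmall := fun m δ hδ => gain_small hFc hHc hFm hHm hC hlim m δ hδ
  rw [← hG] at hsmall
  -- choose constants
  obtain ⟨N, hN⟩ := exists_nat_gt (6 / ε + 1)
  have hN1 : (1:ℝ) < N := by have : 0 < 6 / ε := by positivity
                             linarith
  have hNε : 6 < N * ε := by
    have : 6 / ε < N := by linarith
    rwa [div_lt_iff₀ hε] at this
  obtain ⟨t, ht⟩ : ∃ t : ℝ, t = 1 / (8 * N) := ⟨_, rfl⟩
  have htN : t * (8 * N) = 1 := by rw [ht]; field_simp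
  have ht0 : 0 < t := by rw [ht]; positivity
  have ht1 : t < 1 / 8 := by nlinarith
  -- the sets
  set P : ℕ → T1 → ℝ → Prop := fun m θ x => ∃ y : ℝ, |H θ y - H θ x| + G m θ y < t with hP
  have hGc : ∀ m θ, Continuous (G m θ) := gain_cont hFc hHc
  have hGper : ∀ m θ x (k : ℤ), G m θ (x + k) = G m θ x := gain_per hper hHper
  have hPrat : ∀ m θ x, P m θ x ↔ ∃ q : ℚ, |H θ q - H θ x| + G m θ q < t := by
    intro m θ x
    constructor
    · rintro ⟨y, hy⟩
      have hc : Continuous fun y => |H θ y - H θ x| + G m θ y := by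
        have := hHc θ
        have := hGc m θ
        fun_prop
      have ho : IsOpen {y | |H θ y - H θ x| + G m θ y < t} := isOpen_lt hc continuous_const
      obtain ⟨q, hq⟩ := Rat.isDenseEmbedding_coe_real.dense.exists_mem_open ho ⟨y, hy⟩
      exact ⟨q, hq⟩
    · rintro ⟨q, hq⟩; exact ⟨q, hq⟩
  have hPper' : ∀ m θ x (k : ℤ), P m θ x → P m θ (x + k) := by
    rintro m θ x k ⟨y, hy⟩
    refine ⟨y + k, ?_⟩
    rw [hHper, hHper, hGper, add_sub_add_right_eq_sub]
    exact hy
  have hPper : ∀ m θ (x : ℝ), P m θ (rep (x : T1)) ↔ P m θ x := by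
    intro m θ x
    obtain ⟨n, hn⟩ := rep_coe_real x
    rw [hn]
    refine ⟨fun h => ?_, hPper' m θ x n⟩
    have := hPper' m θ _ (-n) h
    simpa using this
  set A : ℕ → Set (T1 × T1) := fun m => {p | P m p.1 (rep p.2)} with hA
  have hGm : ∀ m, Measurable fun p : T1 × ℝ => G m p.1 p.2 := gain_meas hFm hHm
  have hAm : ∀ m, MeasurableSet (A m) := by
    intro m
    have : A m = ⋃ q : ℚ, {p : T1 × T1 | |H p.1 q - H p.1 (rep p.2)| + G m p.1 q < t} := by
      ext p
      rw [Set.mem_iUnion]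
      exact hPrat m p.1 (rep p.2)
    rw [this]
    refine MeasurableSet.iUnion fun q => measurableSet_lt ?_ measurable_const
    have hq : Measurable fun p : T1 × T1 => (p.1, (q : ℝ)) := measurable_fst.prodMk measurable_const
    have h1 := hHm.comp hq
    have h2 := hHm.comp (measurable_fst.prodMk (rep_meas.comp measurable_snd) :
      Measurable fun p : T1 × T1 => (p.1, rep p.2))
    exact (continuous_abs.measurable.comp (h1.sub h2)).add ((hGm m).comp hq)
  have hAanti : Antitone A := by
    refine antitone_nat_of_succ_le fun m => ?_
    rintro p ⟨y, hy⟩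
    exact ⟨y, lt_of_le_of_lt (add_le_add_right (gain_mono_succ m _ _) _) hy⟩
  have hAmu : ∀ m, ENNReal.ofReal (t / 2) ≤ μ (A m) := by
    intro m
    rw [hdisint _ (hAm m)]
    calc ENNReal.ofReal (t / 2) = ∫⁻ _ : T1, ENNReal.ofReal (t / 2) := by
          rw [lintegral_const, UnitAddCircle.measure_univ, mul_one]
      _ ≤ _ := by
        refine lintegral_mono_ae ?_
        filter_upwards [hsmall m (t / 2) (by linarith)] with θ hθ
        obtain ⟨q, hq⟩ := hθ
        have := dist1_level (μθ θ) (hatomless θ) (H θ q) (t / 4) (by linarith) (by linarith)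
          {x : T1 | (θ, x) ∈ A m} (fun z hz => by
            change P m θ (rep (z : T1))
            rw [hPper]
            refine ⟨q, ?_⟩
            rw [abs_sub_comm]
            change |H θ z - H θ q| ≤ t / 4 at hz
            linarith)
        rwa [show 2 * (t / 4) = t / 2 by ring] at this
  set AA : Set (T1 × T1) := ⋂ m, A m with hAA
  have hAAm : MeasurableSet AA := MeasurableSet.iInter hAm
  have hAApos : ENNReal.ofReal (t / 2) ≤ μ AA := by
    have := tendsto_measure_iInter_atTop (μ := μ) (fun m => (hAm m).nullMeasurableSet) hAanti
      ⟨0, measure_ne_top μ _⟩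
    exact ge_of_tendsto' this hAmu
  have hinv : AA ⊆ f ⁻¹' AA := by
    rintro ⟨θ, ξ⟩ hp
    rw [Set.mem_preimage, hAA, Set.mem_iInter]
    intro m
    have hp' : P (m + 1) θ (rep ξ) := Set.mem_iInter.1 hp (m + 1)
    obtain ⟨y, hy⟩ := hp'
    have e1 : f (θ, ξ) = (θ + (ω : T1), ((F θ (rep ξ) : ℝ) : T1)) := by
      conv_lhs => rw [← rep_coe ξ]
      rw [hproj]
    rw [e1]
    change P m (θ + ω) (rep ((F θ (rep ξ) : ℝ) : T1))
    rw [hPper]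
    refine ⟨F θ y + s * ε, ?_⟩
    simp only [hG, gain] at hy ⊢
    have h1 := hequi θ y (rep ξ)
    rw [← h1] at hy
    have h2 := abs_sub_le (H (θ + ω) (F θ y + s * ε)) (H (θ + ω) (F θ y))
      (H (θ + ω) (F θ (rep ξ)))
    linarith
  have hfull : AA =ᵐ[μ] (Set.univ : Set (T1 × T1)) := by
    rcases herg.ae_empty_or_univ_of_ae_le_preimage hAAm.nullMeasurableSet
      (LE.le.eventuallyLE hinv) with h | h
    · exfalso
      have := measure_congr h
      rw [measure_empty] at this
      rw [this] at hAApos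
      have h3 : 0 < ENNReal.ofReal (t / 2) := ENNReal.ofReal_pos.2 (by linarith)
      exact absurd hAApos (not_le.2 h3)
    · exact h
  have hcompl : μ (AAᶜ) = 0 := ae_eq_univ.1 hfull
  rw [hdisint _ hAAm.compl] at hcompl
  let κ : ProbabilityTheory.Kernel T1 T1 := ⟨μθ, Measure.measurable_of_measurable_coe _ hmeas⟩
  have : ProbabilityTheory.IsMarkovKernel κ := ⟨hθprob⟩
  have hsl : Measurable fun θ => μθ θ {x : T1 | (θ, x) ∈ AAᶜ} :=
    ProbabilityTheory.Kernel.measurable_kernel_prodMk_left (κ := κ) hAAm.compl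
  rw [lintegral_eq_zero_iff hsl] at hcompl
  have : (ae (volume : Measure T1)).NeBot := by
    rw [ae_neBot]
    intro h
    have := UnitAddCircle.measure_univ
    rw [h] at this
    simp at this
  obtain ⟨θ, hθ⟩ := hcompl.exists
  have hlev : ∀ a : ℝ, ∃ y : ℝ, |H θ y - a| < 2 * t ∧
      |H (θ + ω) (F θ y + s * ε) - H (θ + ω) (F θ y)| < 2 * t := by
    intro a
    by_contra hcon
    push Not at hcon
    have hlow := dist1_level (μθ θ) (hatomless θ) a (t / 2) (by linarith) (by linarith)
      {x : T1 | (θ, x) ∈ AAᶜ} (fun z hz => by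
        change |H θ z - a| ≤ t / 2 at hz
        intro hz2
        have h1 : P 1 θ (rep (z : T1)) := Set.mem_iInter.1 hz2 1
        rw [hPper] at h1
        obtain ⟨y, hy⟩ := h1
        simp only [hG, gain] at hy
        have h2 := abs_sub_le (H θ y) (H θ z) a
        have h3 := abs_nonneg (H θ y - H θ z)
        have h4 := abs_nonneg (H (θ + ω) (F θ y + s * ε) - H (θ + ω) (F θ y))
        have h5 := hcon y (by linarith)
        linarith)
    have hθ' : μθ θ {x : T1 | (θ, x) ∈ AAᶜ} = 0 := hθ
    rw [hθ'] at hlow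
    have h3 : 0 < ENNReal.ofReal (2 * (t / 2)) := ENNReal.ofReal_pos.2 (by linarith)
    exact absurd hlow (not_le.2 h3)
  choose y hy1 hy2 using fun j : ℕ => hlev (j * (8 * t))
  have hstep : ∀ j, F θ (y j) + ε ≤ F θ (y (j + 1)) := by
    intro j
    have a1 := abs_lt.1 (hy1 j)
    have a2 := abs_lt.1 (hy1 (j + 1))
    have b1 := abs_lt.1 (hy2 j)
    have b2 := abs_lt.1 (hy2 (j + 1))
    have c := hequi θ (y (j + 1)) (y j)
    push_cast at a2
    by_contra hlt
    rw [not_le] at hlt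
    rcases hs with rfl | rfl
    · have := hHmono (θ + ω) (show F θ (y (j + 1)) ≤ F θ (y j) + 1 * ε by linarith)
      linarith
    · have := hHmono (θ + ω) (show F θ (y (j + 1)) + -1 * ε ≤ F θ (y j) by linarith)
      linarith
  have hchain : ∀ j : ℕ, F θ (y 0) + j * ε ≤ F θ (y j) := by
    intro j
    induction j with
    | zero => simp
    | succ j ih => have := hstep j; push_cast; linarith
  have z1 := hchain N
  have a0 := abs_lt.1 (hy1 0)
  have aN := abs_lt.1 (hy1 N)
  have c := hequi θ (y N) (y 0)
  have d1 := hHlb (θ + ω) (F θ (y N))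
  have d2 := hHub (θ + ω) (F θ (y 0))
  have e1 : (N : ℝ) * (8 * t) = 1 := by linarith
  rw [e1] at aN
  norm_num at a0
  linarith

/-- Lemma 3.2: if `f` has an ergodic invariant probability measure with
atomless fiber measures, then the fibered rotation number is strictly monotone at `f`. -/
theorem continuous_fiber_measures_strictly_monotone
    (ω : ℝ) (hω : Irrational ω)
    (F : T1 → ℝ → ℝ) (hF : IsQpfLift ω F)
    (f : T1 × T1 → T1 × T1) (hfc : Continuous f)
    (hproj : ∀ (θ : T1) (x : ℝ), f (θ, (x : T1)) = (θ + (ω : T1), ((F θ x : ℝ) : T1)))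
    (ρ₀ : ℝ) (hρ : HasRotNum ω F ρ₀)
    (μ : Measure (T1 × T1)) (hprob : IsProbabilityMeasure μ) (herg : Ergodic f μ)
    (μθ : T1 → Measure T1)
    (hθprob : ∀ θ, IsProbabilityMeasure (μθ θ))
    (hatomless : ∀ (θ : T1) (x : T1), μθ θ {x} = 0)
    (hmeas : ∀ B : Set T1, MeasurableSet B → Measurable fun θ => μθ θ B)
    (hdisint : ∀ A : Set (T1 × T1), MeasurableSet A →
      μ A = ∫⁻ θ, μθ θ {x : T1 | (θ, x) ∈ A})
    (hpush : ∀ θ : T1, (μθ θ).map (fun x => (f (θ, x)).2) = μθ (θ + (ω : T1)))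
    (ε : ℝ) (hε : 0 < ε)
    (ρp : ℝ) (hρp : HasRotNum ω (fun θ x => F θ x + ε) ρp)
    (ρm : ℝ) (hρm : HasRotNum ω (fun θ x => F θ x + (-ε)) ρm) :
    ρm < ρ₀ ∧ ρ₀ < ρp := by
  constructor
  · have hρm' : HasRotNum ω (fun θ x => F θ x + (-1) * ε) ρm := by
      simpa only [neg_one_mul] using hρm
    have := core ω F hF f hfc hproj ρ₀ hρ μ hprob herg μθ hθprob hatomless hmeas hdisint hpush
      ε hε (-1) (Or.inr rfl) ρm hρm'
    linarith
  · have hρp' : HasRotNum ω (fun θ x => F θ x + 1 * ε) ρp := by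
      simpa only [one_mul] using hρp
    have := core ω F hF f hfc hproj ρ₀ hρ μ hprob herg μθ hθprob hatomless hmeas hdisint hpush
      ε hε 1 (Or.inl rfl) ρp hρp'
    linarith
end
end

section
/- Let f be a quasiperiodically forced circle homeomorphism over an irrational ω, and suppose f is semi-conjugate to the irrational torus translation R(θ,x) := (θ+ω, x+ρ): there is a continuous surjective map h : T¹×T¹ → T¹×T¹ with π₁∘h = π₁ and h∘f = R∘h, whose fiber maps h_θ are monotone circle maps of degree one (h admits a lift H(θ,x) = (θ, H_θ(x)) with each H_θ : ℝ → ℝ continuous, nondecreasing and H_θ(x+1) = H_θ(x)+1), and assume ω, ρ and 1 are rationally independent. Then μ(A) := λ²(h(A)) (Lebesgue–Haar outer measure on T¹×T¹ of the image set), defined for Borel sets A ⊆ T¹×T¹, is an f-invariant ergodic Borel probability measure; moreover μ(A) = ∫_{T¹} μ_θ(A_θ) dθ where μ_θ(B) := λ(h_θ(B)) for Borel B ⊆ T¹, each μ_θ is an atomless Borel probability measure on T¹, and (f_θ)_* μ_θ = μ_{θ+ω} for every θ. -/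
open Filter Topology MeasureTheory
open scoped ENNReal

noncomputable section

/-- Points with at least two preimages. -/
def dbl {X Y : Type*} (h : X → Y) : Set Y := {y | ∃ p q, p ≠ q ∧ h p = y ∧ h q = y}

section general

variable {X Y : Type*} [MetricSpace X] [CompactSpace X] [MeasurableSpace X] [BorelSpace X]
  [TopologicalSpace Y] [T2Space Y] [MeasurableSpace Y] [BorelSpace Y]

lemma measurableSet_dbl {h : X → Y} (hc : Continuous h) : MeasurableSet (dbl h) := by
  have : dbl h = ⋃ n : ℕ, (fun z : X × X => h z.1) ''
      {z : X × X | (1 : ℝ) / (n + 1) ≤ dist z.1 z.2 ∧ h z.1 = h z.2} := by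
    ext y
    simp only [dbl, Set.mem_ofPred_eq, Set.mem_iUnion, Set.mem_image, Prod.exists]
    constructor
    · rintro ⟨p, q, hpq, rfl, hq⟩
      obtain ⟨n, hn⟩ := exists_nat_one_div_lt (dist_pos.2 hpq)
      exact ⟨n, p, q, ⟨hn.le, hq.symm⟩, rfl⟩
    · rintro ⟨n, p, q, ⟨hd, he⟩, rfl⟩
      refine ⟨p, q, ?_, rfl, he.symm⟩
      rintro rfl
      rw [dist_self] at hd
      have : (0 : ℝ) < 1 / (n + 1) := by positivity
      linarith
  rw [this]
  refine MeasurableSet.iUnion fun n => IsCompact.measurableSet ?_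
  refine IsCompact.image (IsClosed.isCompact ?_) (by fun_prop)
  have c1 : IsClosed {z : X × X | (1 : ℝ) / (n + 1) ≤ dist z.1 z.2} :=
    isClosed_le continuous_const continuous_dist
  have c2 : IsClosed {z : X × X | h z.1 = h z.2} :=
    isClosed_eq (hc.comp continuous_fst) (hc.comp continuous_snd)
  exact c1.inter c2

lemma measurableSet_image_diff {h : X → Y} (hc : Continuous h) {A : Set X}
    (hA : MeasurableSet A) : MeasurableSet (h '' A \ dbl h) := by
  have : h '' A \ dbl h = h '' (A \ h ⁻¹' (dbl h)) := by
    rw [Set.image_sdiff_preimage]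
  rw [this]
  refine MeasurableSet.image_of_continuousOn_injOn
    (hA.diff (hc.measurable (measurableSet_dbl hc))) hc.continuousOn ?_
  intro p hp q hq hpq
  by_contra hne
  exact hp.2 ⟨p, q, hne, rfl, hpq.symm⟩

lemma nullMeasurableSet_image {h : X → Y} (hc : Continuous h) {ν : Measure Y}
    (h0 : ν (dbl h) = 0) {A : Set X}
    (hA : MeasurableSet A) : NullMeasurableSet (h '' A) ν := by
  refine NullMeasurableSet.congr (measurableSet_image_diff hc hA).nullMeasurableSet ?_
  exact sdiff_null_ae_eq_self h0

lemma exists_pull_measure {h : X → Y} (hc : Continuous h) (hs : Function.Surjective h)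
    [Nonempty X] (ν : Measure Y) (h0 : ν (dbl h) = 0) :
    ∃ μ : Measure X, ∀ A, MeasurableSet A → μ A = ν (h '' A) := by
  classical
  let x0 : X := Classical.arbitrary X
  let s : Y → X := fun y => if y ∈ dbl h then x0 else Function.surjInv hs y
  have hpre : ∀ A : Set X, s ⁻¹' A \ dbl h = h '' A \ dbl h := by
    intro A
    ext y
    simp only [Set.mem_sdiff, Set.mem_preimage, and_congr_left_iff]
    intro hy
    simp only [s, if_neg hy]
    constructor
    · intro h1
      exact ⟨_, h1, Function.surjInv_eq hs y⟩
    · rintro ⟨p, hp, rfl⟩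
      have : Function.surjInv hs (h p) = p := by
        by_contra hne
        exact hy ⟨_, _, hne, Function.surjInv_eq hs _, rfl⟩
      rwa [this]
  have hsm : Measurable s := by
    intro A hA
    have h1 : s ⁻¹' A = (h '' A \ dbl h) ∪ (s ⁻¹' A ∩ dbl h) := by
      rw [← hpre, Set.sdiff_union_inter]
    rw [h1]
    refine (measurableSet_image_diff hc hA).union ?_
    by_cases hx : x0 ∈ A
    · have : s ⁻¹' A ∩ dbl h = dbl h := by
        ext y
        simp only [Set.mem_inter_iff, Set.mem_preimage, and_iff_right_iff_imp]
        intro hy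
        simpa [s, hy] using hx
      rw [this]; exact measurableSet_dbl hc
    · have : s ⁻¹' A ∩ dbl h = ∅ := by
        ext y
        simp only [Set.mem_inter_iff, Set.mem_preimage, Set.mem_empty_iff_false, iff_false, not_and]
        intro h1 hy
        exact hx (by simpa [s, hy] using h1)
      rw [this]; exact MeasurableSet.empty
  refine ⟨ν.map s, fun A hA => ?_⟩
  rw [Measure.map_apply hsm hA, ← measure_sdiff_null h0, hpre, measure_sdiff_null h0]

end general

instance instProbT1 : IsProbabilityMeasure (volume : Measure T1) := ⟨by
  rw [AddCircle.measure_univ]; simp⟩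

instance instNullT1 : NullSingletonClass (volume : Measure T1) := ⟨fun x => by
  rw [← Metric.closedBall_zero, AddCircle.volume_closedBall]
  simp⟩

instance instInvT2 : Measure.IsAddRightInvariant (volume : Measure (T1 × T1)) := by
  rw [Measure.volume_eq_prod]; infer_instance

/-- Characters of the two-torus. -/
def chi (a b : ℤ) : BoundedContinuousFunction (T1 × T1) ℂ :=
  BoundedContinuousFunction.mkOfCompact ⟨fun p => fourier a p.1 * fourier b p.2, by fun_prop⟩

lemma chi_apply (a b : ℤ) (p : T1 × T1) : chi a b p = fourier a p.1 * fourier b p.2 := rfl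

lemma chi_add (a b : ℤ) (p q : T1 × T1) : chi a b (p + q) = chi a b p * chi a b q := by
  simp only [chi_apply, fourier_apply, Prod.fst_add, Prod.snd_add, smul_add, AddCircle.toCircle_add,
    Circle.coe_mul]
  ring

lemma chi_mul (a b c d : ℤ) : chi a b * chi c d = chi (a + c) (b + d) := by
  ext p
  simp only [BoundedContinuousFunction.mul_apply, chi_apply, fourier_add]
  ring

lemma chi_star (a b : ℤ) : star (chi a b) = chi (-a) (-b) := by
  ext p
  simp only [BoundedContinuousFunction.star_apply, chi_apply, fourier_neg, star_mul']
  rfl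

lemma chi_zero : chi 0 0 = 1 := by
  ext p
  simp [chi_apply]

/-- The star algebra of trigonometric polynomials. -/
def trigAlg : StarSubalgebra ℂ (BoundedContinuousFunction (T1 × T1) ℂ) where
  toSubalgebra := Algebra.adjoin ℂ (Set.range fun n : ℤ × ℤ => chi n.1 n.2)
  star_mem' := by
    change Algebra.adjoin ℂ (Set.range fun n : ℤ × ℤ => chi n.1 n.2) ≤
      star (Algebra.adjoin ℂ (Set.range fun n : ℤ × ℤ => chi n.1 n.2))
    refine Algebra.adjoin_le ?_
    rintro _ ⟨n, rfl⟩
    refine Algebra.subset_adjoin ⟨(-n.1, -n.2), ?_⟩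
    exact (chi_star _ _).symm

lemma trigAlg_span : Subalgebra.toSubmodule trigAlg.toSubalgebra =
    Submodule.span ℂ (Set.range fun n : ℤ × ℤ => chi n.1 n.2) := by
  apply Algebra.adjoin_eq_span_of_subset
  refine .trans (fun x => Submonoid.closure_induction (fun _ => id) ⟨0, chi_zero⟩ ?_)
    Submodule.subset_span
  rintro _ _ _ _ ⟨m, rfl⟩ ⟨n, rfl⟩
  exact ⟨m + n, (chi_mul _ _ _ _).symm⟩

lemma torus_measure_ext {P P' : Measure (T1 × T1)} [IsFiniteMeasure P] [IsFiniteMeasure P']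
    (hPP : ∀ a b : ℤ, ∫ p, chi a b p ∂P = ∫ p, chi a b p ∂P') : P = P' := by
  refine ext_of_forall_mem_subalgebra_integral_eq_of_polish (𝕜 := ℂ) (A := trigAlg) ?_ ?_
  · intro x y hxy
    have hmem : ∀ a b : ℤ, chi a b ∈ trigAlg := fun a b =>
      Algebra.subset_adjoin ⟨(a, b), rfl⟩
    by_cases h1 : x.1 = y.1
    · have h2 : x.2 ≠ y.2 := fun h2 => hxy (Prod.ext h1 h2)
      refine ⟨_, ⟨_, ⟨chi 0 1, hmem 0 1, rfl⟩, rfl⟩, ?_⟩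
      change chi 0 1 x ≠ chi 0 1 y
      simp only [chi_apply, fourier_zero, one_mul, fourier_one]
      intro h3
      exact h2 (AddCircle.injective_toCircle one_ne_zero (Subtype.coe_injective h3))
    · refine ⟨_, ⟨_, ⟨chi 1 0, hmem 1 0, rfl⟩, rfl⟩, ?_⟩
      change chi 1 0 x ≠ chi 1 0 y
      simp only [chi_apply, fourier_zero, mul_one, fourier_one]
      intro h3
      exact h1 (AddCircle.injective_toCircle one_ne_zero (Subtype.coe_injective h3))
  · intro g hg
    have hg' : g ∈ Submodule.span ℂ (Set.range fun n : ℤ × ℤ => chi n.1 n.2) := by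
      rw [← trigAlg_span]; exact hg
    induction hg' using Submodule.span_induction with
    | mem x hx => obtain ⟨n, rfl⟩ := hx; exact hPP _ _
    | zero => simp
    | add x y hx hy ihx ihy =>
      have hx' : x ∈ trigAlg := by
        rw [← trigAlg_span] at hx; exact hx
      have hy' : y ∈ trigAlg := by
        rw [← trigAlg_span] at hy; exact hy
      simp only [BoundedContinuousFunction.coe_add, Pi.add_apply]
      rw [integral_add (x.integrable _) (y.integrable _),
        integral_add (x.integrable _) (y.integrable _), ihx hx', ihy hy']
    | smul c x hx ih =>
      have hx' : x ∈ trigAlg := by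
        rw [← trigAlg_span] at hx; exact hx
      simp only [BoundedContinuousFunction.coe_smul]
      rw [integral_smul, integral_smul, ih hx']

lemma chi_ne_one {ω ρ : ℝ}
    (hind : ∀ a b c : ℤ, (a : ℝ) * ω + (b : ℝ) * ρ + (c : ℝ) = 0 → a = 0 ∧ b = 0 ∧ c = 0)
    {a b : ℤ} (hab : ¬ (a = 0 ∧ b = 0)) : chi a b ((ω : T1), (ρ : T1)) ≠ 1 := by
  intro h1
  rw [chi_apply, fourier_coe_apply, fourier_coe_apply, ← Complex.exp_add,
    Complex.exp_eq_one_iff] at h1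
  obtain ⟨n, hn⟩ := h1
  have h2 : (2 * (Real.pi : ℂ) * Complex.I) * ((a : ℂ) * ω + b * ρ - n) = 0 := by
    simp only [Complex.ofReal_one, div_one] at hn
    linear_combination hn
  have h3 : ((a : ℂ) * ω + b * ρ - n) = 0 :=
    (mul_eq_zero.1 h2).resolve_left Complex.two_pi_I_ne_zero
  have h4 : (a : ℝ) * ω + (b : ℝ) * ρ + ((-n : ℤ) : ℝ) = 0 := by
    have : ((((a : ℝ) * ω + (b : ℝ) * ρ + ((-n : ℤ) : ℝ) : ℝ)) : ℂ) = 0 := by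
      push_cast
      linear_combination h3
    exact_mod_cast this
  obtain ⟨ha, hb, -⟩ := hind _ _ _ h4
  exact hab ⟨ha, hb⟩

lemma setIntegral_chi_eq_zero {α : T1 × T1} {a b : ℤ} (h1 : chi a b α ≠ 1)
    {A : Set (T1 × T1)} (hA : MeasurableSet A) (hinv : (fun q => q + α) ⁻¹' A = A) :
    ∫ p in A, chi a b p = 0 := by
  have h2 : ∫ p in A, chi a b p = chi a b α * ∫ p in A, chi a b p := by
    conv_lhs => rw [← integral_indicator hA, ← integral_add_right_eq_self _ α]
    rw [← integral_indicator hA, ← integral_const_mul]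
    congr 1
    ext q
    have h3 : q + α ∈ A ↔ q ∈ A := by
      conv_rhs => rw [← hinv]
      rfl
    by_cases hq : q ∈ A
    · rw [Set.indicator_of_mem (h3.2 hq), Set.indicator_of_mem hq, chi_add, mul_comm]
    · rw [Set.indicator_of_notMem (fun h => hq (h3.1 h)), Set.indicator_of_notMem hq, mul_zero]
  have h4 : (chi a b α - 1) * ∫ p in A, chi a b p = 0 := by linear_combination -h2
  exact (mul_eq_zero.1 h4).resolve_left (sub_ne_zero.2 h1)

lemma ergodic_torus {ω ρ : ℝ}
    (hind : ∀ a b c : ℤ, (a : ℝ) * ω + (b : ℝ) * ρ + (c : ℝ) = 0 → a = 0 ∧ b = 0 ∧ c = 0) :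
    Ergodic (fun q : T1 × T1 => q + ((ω : T1), (ρ : T1))) volume := by
  refine ⟨measurePreserving_add_right _ _, ⟨fun A hA hinv => ?_⟩⟩
  rw [eventuallyConst_set']
  have key : (volume : Measure (T1 × T1)).restrict A = (volume A) • volume := by
    have : IsFiniteMeasure ((volume A) • (volume : Measure (T1 × T1))) :=
      Measure.smul_finite _ (measure_ne_top _ _)
    refine torus_measure_ext fun a b => ?_
    rw [integral_smul_measure]
    by_cases hab : a = 0 ∧ b = 0
    · obtain ⟨rfl, rfl⟩ := hab
      simp [chi_zero, Measure.real]
    · have h1 := chi_ne_one hind hab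
      rw [setIntegral_chi_eq_zero h1 hA hinv, ← setIntegral_univ,
        setIntegral_chi_eq_zero h1 MeasurableSet.univ rfl, smul_zero]
  have h2 := congrArg (fun m : Measure (T1 × T1) => m Aᶜ) key
  simp only [Measure.smul_apply, smul_eq_mul, Measure.restrict_apply hA.compl,
    Set.compl_inter_self, measure_empty] at h2
  rcases mul_eq_zero.1 h2.symm with h3 | h3
  · left; exact ae_eq_empty.2 h3
  · right; exact ae_eq_univ.2 h3

lemma countable_dbl_fiber {H : ℝ → ℝ} (hm : Monotone H) (hper : ∀ x, H (x + 1) = H x + 1)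
    {g : T1 → T1} (hg : ∀ x : ℝ, g (x : T1) = ((H x : ℝ) : T1)) : (dbl g).Countable := by
  refine (hm.countable_setOfPred_two_preimages.image (fun c : ℝ => (c : T1))).mono ?_
  have main : ∀ x y : ℝ, x < y → y < x + 1 → ((H x : ℝ) : T1) = ((H y : ℝ) : T1) →
      ((H x : ℝ) : T1) ∈ (fun c : ℝ => (c : T1)) '' {c | ∃ x y, x < y ∧ H x = c ∧ H y = c} := by
    intro x y hxy hyx he
    have h1 : (((H y - H x : ℝ)) : T1) = 0 := by
      rw [AddCircle.coe_sub, he, sub_self]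
    obtain ⟨n, hn⟩ := (AddCircle.coe_eq_zero_iff (1 : ℝ)).1 h1
    have hn' : (n : ℝ) = H y - H x := by simpa using hn
    have h2 := hm hxy.le
    have h3 := hm hyx.le
    rw [hper] at h3
    have h4 : (0 : ℝ) ≤ n := by linarith
    have h5 : (n : ℝ) ≤ 1 := by linarith
    have h4' : (0 : ℤ) ≤ n := by exact_mod_cast h4
    have h5' : n ≤ 1 := by exact_mod_cast h5
    have h6 : n = 0 ∨ n = 1 := by omega
    rcases h6 with rfl | rfl
    · refine ⟨H x, ⟨x, y, hxy, rfl, ?_⟩, rfl⟩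
      push_cast at hn'; linarith
    · refine ⟨H y, ⟨y, x + 1, hyx, rfl, ?_⟩, he.symm⟩
      rw [hper]; push_cast at hn'; linarith
  rintro c ⟨p, q, hpq, hp, hq⟩
  obtain ⟨x, hx, rfl⟩ := AddCircle.coe_image_Ico_eq (1 : ℝ) 0 ▸ Set.mem_univ p
  obtain ⟨y, hy, rfl⟩ := AddCircle.coe_image_Ico_eq (1 : ℝ) 0 ▸ Set.mem_univ q
  rw [hg] at hp hq
  rw [zero_add] at hx hy
  rcases lt_trichotomy x y with hlt | heq | hlt
  · rw [← hp]
    exact main x y hlt (by linarith [hx.1, hy.2]) (hp.trans hq.symm)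
  · exact absurd (by rw [heq]) hpq
  · rw [← hq]
    exact main y x hlt (by linarith [hx.2, hy.1]) (hq.trans hp.symm)

/-- the push-forward construction `μ(A) := λ²(h(A))` along a
fiber-respecting semi-conjugacy `h` to an irrational torus translation yields an
`f`-invariant ergodic probability measure that disintegrates into the atomless fiber
measures `μ_θ(B) := λ(h_θ(B))`, which are moved to one another by the fiber maps of `f`. -/
theorem semiconjugacy_measure_construction
    (ω : ℝ) (hω : Irrational ω)
    (F : T1 → ℝ → ℝ) (hF : IsQpfLift ω F)
    (f : T1 × T1 → T1 × T1) (hfc : Continuous f)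
    (hfproj : ∀ (θ : T1) (x : ℝ), f (θ, (x : T1)) = (θ + (ω : T1), ((F θ x : ℝ) : T1)))
    (ρ : ℝ)
    (h : T1 × T1 → T1 × T1) (hhc : Continuous h) (hhs : Function.Surjective h)
    (hπ : ∀ p : T1 × T1, (h p).1 = p.1)
    (hsemi : ∀ p : T1 × T1, h (f p) = ((h p).1 + (ω : T1), (h p).2 + (ρ : T1)))
    (H : T1 → ℝ → ℝ)
    (hHc : ∀ θ, Continuous (H θ)) (hHm : ∀ θ, Monotone (H θ))
    (hHper : ∀ (θ : T1) (x : ℝ), H θ (x + 1) = H θ x + 1)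
    (hHproj : ∀ (θ : T1) (x : ℝ), h (θ, (x : T1)) = (θ, ((H θ x : ℝ) : T1)))
    (hind : ∀ a b c : ℤ, (a : ℝ) * ω + (b : ℝ) * ρ + (c : ℝ) = 0 → a = 0 ∧ b = 0 ∧ c = 0) :
    ∃ μ : Measure (T1 × T1),
      (∀ A : Set (T1 × T1), MeasurableSet A → μ A = volume (h '' A)) ∧
      IsProbabilityMeasure μ ∧ MeasurePreserving f μ μ ∧ Ergodic f μ ∧
      ∃ μθ : T1 → Measure T1,
        (∀ (θ : T1) (B : Set T1), MeasurableSet B →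
          μθ θ B = volume ((fun x : T1 => (h (θ, x)).2) '' B)) ∧
        (∀ θ, IsProbabilityMeasure (μθ θ)) ∧
        (∀ (θ : T1) (x : T1), μθ θ {x} = 0) ∧
        (∀ A : Set (T1 × T1), MeasurableSet A →
          μ A = ∫⁻ θ, μθ θ {x : T1 | (θ, x) ∈ A}) ∧
        (∀ θ : T1, (μθ θ).map (fun x => (f (θ, x)).2) = μθ (θ + (ω : T1))) := by
  have hfib : ∀ θ x, h (θ, x) = (θ, (h (θ, x)).2) := fun θ x => Prod.ext (hπ _) rfl
  let g : T1 → T1 → T1 := fun θ x => (h (θ, x)).2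
  have hgc : ∀ θ, Continuous (g θ) := fun θ => by
    exact continuous_snd.comp (hhc.comp (Continuous.prodMk continuous_const continuous_id))
  have hgs : ∀ θ, Function.Surjective (g θ) := by
    intro θ y
    obtain ⟨⟨θ', x⟩, hp⟩ := hhs (θ, y)
    have h1 : θ' = θ := by
      have := hπ (θ', x)
      rw [hp] at this
      exact this.symm
    subst h1
    exact ⟨x, by simp only [g, hp]⟩
  have hgcount : ∀ θ, (dbl (g θ)).Countable := fun θ =>
    countable_dbl_fiber (hHm θ) (hHper θ) (fun x => by simp only [g, hHproj])
  have hg0 : ∀ θ, volume (dbl (g θ)) = 0 := fun θ => (hgcount θ).measure_zero _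
  have hsec : ∀ θ, Prod.mk θ ⁻¹' (dbl h) = dbl (g θ) := by
    intro θ
    ext y
    constructor
    · rintro ⟨⟨a, x⟩, ⟨b, z⟩, hne, h1, h2⟩
      have ha : a = θ := by have := hπ (a, x); rw [h1] at this; exact this.symm
      have hb : b = θ := by have := hπ (b, z); rw [h2] at this; exact this.symm
      subst ha
      subst hb
      refine ⟨x, z, fun he => hne (by rw [he]), by simp only [g, h1], by simp only [g, h2]⟩
    · rintro ⟨x, z, hne, h1, h2⟩
      refine ⟨(θ, x), (θ, z), fun he => hne (congrArg Prod.snd he), ?_, ?_⟩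
      · rw [hfib]; exact Prod.ext rfl h1
      · rw [hfib]; exact Prod.ext rfl h2
  have hsecim : ∀ (A : Set (T1 × T1)) θ, Prod.mk θ ⁻¹' (h '' A) = g θ '' {x | (θ, x) ∈ A} := by
    intro A θ
    ext y
    constructor
    · rintro ⟨⟨a, x⟩, hA, h1⟩
      have ha : a = θ := by have := hπ (a, x); rw [h1] at this; exact this.symm
      subst ha
      exact ⟨x, hA, by simp only [g, h1]⟩
    · rintro ⟨x, hA, h1⟩
      refine ⟨(θ, x), hA, ?_⟩
      rw [hfib]; exact Prod.ext rfl h1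
  have hh0 : volume (dbl h) = 0 := by
    rw [Measure.volume_eq_prod, Measure.prod_apply (measurableSet_dbl hhc)]
    simp only [hsec, hg0, lintegral_zero]
  have hfs : Function.Surjective f := by
    rintro ⟨θ, y⟩
    obtain ⟨y, rfl⟩ := QuotientAddGroup.mk_surjective y
    obtain ⟨x, hx⟩ := hF.surj (θ - (ω : T1)) y
    refine ⟨(θ - (ω : T1), (x : T1)), ?_⟩
    rw [hfproj, hx, sub_add_cancel]
  have himage : ∀ A : Set (T1 × T1),
      h '' (f ⁻¹' A) = (fun q => q + ((ω : T1), (ρ : T1))) ⁻¹' (h '' A) := by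
    intro A
    ext q
    constructor
    · rintro ⟨p, hp, rfl⟩
      exact ⟨f p, hp, hsemi p⟩
    · rintro ⟨a, ha, hq⟩
      obtain ⟨p, rfl⟩ := hfs a
      refine ⟨p, ha, ?_⟩
      rw [hsemi] at hq
      exact add_right_cancel (b := ((ω : T1), (ρ : T1))) hq
  obtain ⟨μ, hμ⟩ := exists_pull_measure hhc hhs volume hh0
  have hex : ∀ θ, ∃ m : Measure T1, ∀ A, MeasurableSet A → m A = volume (g θ '' A) := fun θ =>
    exists_pull_measure (hgc θ) (hgs θ) volume (hg0 θ)
  choose μθ hμθ using hex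
  have hμp : IsProbabilityMeasure μ := ⟨by
    rw [hμ _ MeasurableSet.univ, Set.image_univ, hhs.range_eq, measure_univ]⟩
  have hmp : MeasurePreserving f μ μ := by
    refine ⟨hfc.measurable, Measure.ext fun A hA => ?_⟩
    rw [Measure.map_apply hfc.measurable hA, hμ _ (hfc.measurable hA), himage, hμ _ hA,
      measure_preimage_add_right]
  refine ⟨μ, hμ, hμp, hmp, ⟨hmp, ⟨fun A hA hinv => ?_⟩⟩, μθ, hμθ, ?_, ?_, ?_, ?_⟩
  · have hn := nullMeasurableSet_image hhc hh0 hA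
    have hi := himage A
    rw [hinv] at hi
    rw [eventuallyConst_set']
    rcases (ergodic_torus hind).quasiErgodic.ae_empty_or_univ₀ hn
      (Filter.EventuallyEq.of_eq hi.symm) with h1 | h1
    · left
      rw [ae_eq_empty] at h1 ⊢
      rw [hμ _ hA, h1]
    · right
      rw [ae_eq_univ, prob_compl_eq_zero_iff hA, hμ _ hA, measure_congr h1, measure_univ]
  · intro θ
    exact ⟨by rw [hμθ _ _ MeasurableSet.univ, Set.image_univ, (hgs θ).range_eq, measure_univ]⟩
  · intro θ x
    rw [hμθ _ _ (measurableSet_singleton x), Set.image_singleton, measure_singleton]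
  · intro A hA
    rw [hμ _ hA, ← measure_sdiff_null hh0, Measure.volume_eq_prod,
      Measure.prod_apply (measurableSet_image_diff hhc hA)]
    refine lintegral_congr fun θ => ?_
    have hm : MeasurableSet {x : T1 | (θ, x) ∈ A} := measurable_prodMk_left hA
    rw [hμθ _ _ hm, Set.preimage_sdiff, hsec, hsecim, measure_sdiff_null (hg0 θ)]
  · intro θ
    have hfθ : Measurable fun x => (f (θ, x)).2 :=
      (continuous_snd.comp (hfc.comp (Continuous.prodMk continuous_const continuous_id))).measurable
    have hf1 : ∀ x, f (θ, x) = (θ + (ω : T1), (f (θ, x)).2) := by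
      intro x
      obtain ⟨x, rfl⟩ := QuotientAddGroup.mk_surjective x
      have h1 : (f (θ, (x : T1))).1 = θ + (ω : T1) := by rw [hfproj]
      exact Prod.ext h1 rfl
    have hgf : ∀ x, g (θ + (ω : T1)) (f (θ, x)).2 = g θ x + (ρ : T1) := by
      intro x
      simp only [g]
      rw [← hf1, hsemi]
    refine Measure.ext fun B hB => ?_
    rw [Measure.map_apply hfθ hB, hμθ _ _ (hfθ hB), hμθ _ _ hB,
      ← measure_preimage_add_right volume (ρ : T1) (g (θ + (ω : T1)) '' B)]
    congr 1
    ext y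
    constructor
    · rintro ⟨x, hx, rfl⟩
      exact ⟨_, hx, hgf x⟩
    · rintro ⟨z, hz, hy⟩
      obtain ⟨z, rfl⟩ := QuotientAddGroup.mk_surjective z
      obtain ⟨x, hx⟩ := hF.surj θ z
      have hfx : (f (θ, (x : T1))).2 = (z : T1) := by rw [hfproj, hx]
      refine ⟨(x : T1), ?_, ?_⟩
      · change (f (θ, (x : T1))).2 ∈ B
        rw [hfx]; exact hz
      · have h3 := hgf (x : T1)
        rw [hfx] at h3
        exact add_right_cancel (h3.symm.trans hy)
end
end
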